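/- There exist universal constants c, C > 0 such that the following holds. Let X be an isotropic random vector in ℝⁿ with log-concave density which is ψ_α (α ∈ [1,2]) with constant b_α, and let A be an n×n real matrix with ‖A‖_HS² = n. Set ñ := n/(‖A‖_op²·b_α²). Then P(| |AX| − √n | ≥ t√n) ≤ C·exp(−c·ñ^{α/2}·min(t^{2+α}, t)) for all t ≥ 0. -/

import Mathlib

open MeasureTheory ProbabilityTheory Real
open scoped ENNReal RealInnerProductSpace Pointwise NNReal

noncomputable section

/-- A nonnegative function is log-concave if `f(λx+(1-λ)y) ≥ f(x)^λ f(y)^{1-λ}`. -/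
def IsLogConcaveFn {E : Type*} [AddCommGroup E] [Module ℝ E] (f : E → ℝ) : Prop :=
  (∀ x, 0 ≤ f x) ∧
  ∀ x y : E, ∀ l : ℝ, 0 ≤ l → l ≤ 1 →
    f x ^ l * f y ^ (1 - l) ≤ f (l • x + (1 - l) • y)

/-- Hilbert-Schmidt (Frobenius) norm of a matrix. -/
def hsNorm {n : ℕ} (A : Matrix (Fin n) (Fin n) ℝ) : ℝ :=
  Real.sqrt (∑ i, ∑ j, (A i j) ^ 2)

/-- Operator norm of a matrix acting on Euclidean space. -/
def opNorm {n : ℕ} (A : Matrix (Fin n) (Fin n) ℝ) : ℝ :=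
  ‖LinearMap.toContinuousLinearMap (Matrix.toEuclideanLin A)‖

/-- Application of a matrix to a Euclidean vector. -/
def mApp {n : ℕ} (A : Matrix (Fin n) (Fin n) ℝ) (x : EuclideanSpace ℝ (Fin n)) :
    EuclideanSpace ℝ (Fin n) := Matrix.toEuclideanLin A x

/-- The random vector `X` has density `f` with respect to Lebesgue measure. -/
def HasDensityFn {Ω : Type*} [MeasurableSpace Ω] (P : Measure Ω) {n : ℕ}
    (X : Ω → EuclideanSpace ℝ (Fin n)) (f : EuclideanSpace ℝ (Fin n) → ℝ) : Prop :=
  Measurable X ∧ Measure.map X P = volume.withDensity fun x => ENNReal.ofReal (f x)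

/-- `X` is isotropic: centered with identity covariance. -/
def Isotropic {Ω : Type*} [MeasurableSpace Ω] (P : Measure Ω) {n : ℕ}
    (X : Ω → EuclideanSpace ℝ (Fin n)) : Prop :=
  (∫ ω, X ω ∂P) = 0 ∧
  ∀ θ η : EuclideanSpace ℝ (Fin n), (∫ ω, ⟪X ω, θ⟫ * ⟪X ω, η⟫ ∂P) = ⟪θ, η⟫

/-- `X` is ψ_α with constant `b`. -/
def IsPsiAlpha {Ω : Type*} [MeasurableSpace Ω] (P : Measure Ω) {n : ℕ}
    (X : Ω → EuclideanSpace ℝ (Fin n)) (α b : ℝ) : Prop :=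
  ∀ p : ℝ, 2 ≤ p → ∀ y : EuclideanSpace ℝ (Fin n),
    (∫ ω, |⟪X ω, y⟫| ^ p ∂P) ^ (1/p) ≤ b * p ^ (1/α) * (∫ ω, ⟪X ω, y⟫ ^ 2 ∂P) ^ ((1:ℝ)/2)

/-- `G` is a standard Gaussian random vector in `ℝⁿ`. -/
def IsStdGaussian {Ω : Type*} [MeasurableSpace Ω] (P : Measure Ω) {n : ℕ}
    (G : Ω → EuclideanSpace ℝ (Fin n)) : Prop :=
  Measurable G ∧
  Measure.map G P = volume.withDensity fun x =>
    ENNReal.ofReal ((2 * π) ^ (-(n:ℝ)/2) * Real.exp (-‖x‖ ^ 2 / 2))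

/-- Surface area of the unit sphere `S^{k-1}` in `ℝᵏ`. -/
def sphereVol (k : ℕ) : ℝ := 2 * π ^ ((k : ℝ)/2) / Real.Gamma ((k : ℝ)/2)

/-- The marginal density `π_F g(x) = ∫_{F^⊥} g(x+y) dy`. -/
def marginalDensity {n : ℕ} (g : EuclideanSpace ℝ (Fin n) → ℝ)
    (F : Submodule ℝ (EuclideanSpace ℝ (Fin n))) (x : EuclideanSpace ℝ (Fin n)) : ℝ :=
  ∫ y : Fᗮ, g (x + y)

/-- `h_{k,p}(u) = vol(S^{k-1}) ∫₀^∞ t^{p+k-1} π_{u(E₀)} g(t u(θ₀)) dt`. -/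
def hkp {n : ℕ} (g : EuclideanSpace ℝ (Fin n) → ℝ)
    (E₀ : Submodule ℝ (EuclideanSpace ℝ (Fin n))) (θ₀ : EuclideanSpace ℝ (Fin n))
    (k : ℕ) (p : ℝ) (u : Matrix (Fin n) (Fin n) ℝ) : ℝ :=
  sphereVol k * ∫ t in Set.Ioi (0:ℝ), t ^ (p + (k:ℝ) - 1) *
    marginalDensity g (Submodule.map (Matrix.toEuclideanLin u) E₀) (t • mApp u θ₀)

/-- Support functional of the one-sided L_q-centroid body `Z⁺_q(w)`. -/
def suppZplus {m : ℕ} (w : EuclideanSpace ℝ (Fin m) → ℝ) (q : ℝ)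
    (y : EuclideanSpace ℝ (Fin m)) : ℝ :=
  (2 * ∫ x, (max ⟪x, y⟫ 0) ^ q * w x) ^ (1/q)

/-- Ball's body `K_q(w) = {x : q ∫₀^∞ t^{q-1} w(tx) dt ≥ 1}`. -/
def ballBody {m : ℕ} (w : EuclideanSpace ℝ (Fin m) → ℝ) (q : ℝ) :
    Set (EuclideanSpace ℝ (Fin m)) :=
  {x | 1 ≤ q * ∫ t in Set.Ioi (0:ℝ), t ^ (q-1) * w (t • x)}

/-- The one-sided L_q-centroid body `Z⁺_q(w)`, as the convex set with support
functional `suppZplus w q`. -/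
def ZplusBody {m : ℕ} (w : EuclideanSpace ℝ (Fin m) → ℝ) (q : ℝ) :
    Set (EuclideanSpace ℝ (Fin m)) :=
  {x | ∀ y, ⟪x, y⟫ ≤ suppZplus w q y}

/-!
The law `ρ` of `AX / √n` is log-concave with second moment `1`, and `|AX| / √n` is the norm of a
`ρ`-distributed point. Take `k` independent standard Gaussian vectors `G i` and consider
`F a = ∫ exp (-∑ i, (a - ⟪G i, z⟫) ^ 2 / 2) ∂ρ z`. By the Prékopa–Leindler inequality,
`F a * F b ≤ F ((a + b) / 2) ^ 2`. Averaging over the Gaussians gives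
`∬ φ z w a b ^ k ≤ ∬ φ z w m m ^ k` with `m = (a + b) / 2`, where `φ` is an explicit
two-dimensional Gaussian integral. If `z` and `w` are almost orthogonal, then `φ z w a b` is close
to `(V * W)⁻¹ * exp (-a ^ 2 / (2 * V ^ 2) - b ^ 2 / (2 * W ^ 2))` with `V = √(1 + ‖z‖ ^ 2)` and
`W = √(1 + ‖w‖ ^ 2)`. For `V ≈ a` and `W ≈ b` this is `(a * b)⁻¹ * exp (-1)`, whereas
`φ z w m m` is at most about `m⁻² * exp (-1)` everywhere. The ratio `a * b / m ^ 2` equals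
`1 - ((a - b) / (a + b)) ^ 2`, so the product of the masses of the two shells is at most about
`exp (-k * ((a - b) / (a + b)) ^ 2)`: distant shells cannot both be heavy, and `ρ` concentrates
around its heaviest shell. Borell's lemma controls the tails, so that the unit second moment forces
this shell to be `V ≈ √2`, that is, `‖z‖ ≈ 1`.

With `ε = ‖A‖_op * b / √n`, the `ψ_α` condition bounds the exponential moment of `k * |⟪z, w⟫|` for
independent points by about `exp (k * τ ^ 2)`, as long as `k` is at most a constant times
`τ ^ α * ε ^ (-α)`. Since `ε ^ (-α)` is the power `α / 2` of `n / (‖A‖_op ^ 2 * b ^ 2)`, taking `τ`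
proportional to `t ≤ 1` yields the rate `k * τ ^ 2`. For large `t` the case `t = 1` is combined with
Borell's lemma.
-/

/-! ### The Prékopa–Leindler inequality -/

section PrekopaLeindlerReal

lemma volume_add_volume_le_volume_add_of_isCompact {K L : Set ℝ} (hK : IsCompact K)
    (hL : IsCompact L) (hK₀ : K.Nonempty) (hL₀ : L.Nonempty) :
    volume K + volume L ≤ volume (K + L) := by
  set a := sSup K
  set b := sInf L
  have ha : a ∈ K := hK.sSup_mem hK₀
  have hb : b ∈ L := hL.sInf_mem hL₀
  have overlap : (K + {b}) ∩ ({a} + L) ⊆ {a + b} := by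
    simp only [Set.add_singleton, Set.singleton_add]
    rintro _ ⟨⟨x, hx, rfl⟩, ⟨y, hy, hxy⟩⟩
    have hxa : x ≤ a := le_csSup hK.bddAbove hx
    have hby : b ≤ y := csInf_le hL.bddBelow hy
    simp only [Set.mem_singleton_iff] at hxy ⊢
    linarith
  calc volume K + volume L = volume (K + {b}) + volume ({a} + L) := by simp
    _ = volume ((K + {b}) ∪ ({a} + L)) := by
      rw [← measure_union_add_inter _ (isCompact_singleton.add hL).measurableSet,
        measure_mono_null overlap (measure_singleton _), add_zero]
    _ ≤ volume (K + L) := measure_mono <| Set.union_subset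
      (Set.add_subset_add_left (Set.singleton_subset_iff.2 hb))
      (Set.add_subset_add_right (Set.singleton_subset_iff.2 ha))

lemma volume_add_volume_le_volume_add {s t : Set ℝ} (hs : MeasurableSet s) (ht : MeasurableSet t)
    (hs₀ : s.Nonempty) (ht₀ : t.Nonempty) : volume s + volume t ≤ volume (s + t) := by
  obtain ⟨a, ha⟩ := hs₀
  obtain ⟨b, hb⟩ := ht₀
  simp only [hs.measure_eq_iSup_isCompact, ht.measure_eq_iSup_isCompact, iSup_and']
  refine ENNReal.biSup_add_biSup_le' ⟨∅, by simp⟩ ⟨∅, by simp⟩ fun K hK L hL ↦ ?_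
  calc volume K + volume L
      ≤ volume (insert a K) + volume (insert b L) := by
        gcongr <;> exact Set.subset_insert _ _
    _ ≤ volume (insert a K + insert b L) :=
        volume_add_volume_le_volume_add_of_isCompact (hK.2.insert a) (hL.2.insert b)
          (Set.insert_nonempty _ _) (Set.insert_nonempty _ _)
    _ ≤ volume (s + t) := measure_mono <| Set.add_subset_add
        (Set.insert_subset ha hK.1) (Set.insert_subset hb hL.1)

lemma volume_add_volume_le_two_mul_volume_of_midpoint_mem {s t u : Set ℝ} (hs : MeasurableSet s)
    (ht : MeasurableSet t) (hs₀ : s.Nonempty) (ht₀ : t.Nonempty)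
    (h : ∀ x ∈ s, ∀ y ∈ t, midpoint ℝ x y ∈ u) : volume s + volume t ≤ 2 * volume u := by
  have hsub : s + t ⊆ (2 : ℝ) • u := by
    rintro _ ⟨x, hx, y, hy, rfl⟩
    exact ⟨_, h x hx y hy, by simp [midpoint_eq_smul_add]⟩
  calc volume s + volume t ≤ volume (s + t) := volume_add_volume_le_volume_add hs ht hs₀ ht₀
    _ ≤ volume ((2 : ℝ) • u) := measure_mono hsub
    _ = 2 * volume u := by simp [Measure.addHaar_smul]

lemma lintegral_eq_lintegral_meas_ofReal_lt {X : Type*} [MeasurableSpace X] {μ : Measure X}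
    {f : X → ℝ≥0∞} (hf : Measurable f) (hfin : ∀ x, f x ≠ ∞) :
    ∫⁻ x, f x ∂μ = ∫⁻ t in Set.Ioi (0 : ℝ), μ {x | ENNReal.ofReal t < f x} := by
  calc ∫⁻ x, f x ∂μ = ∫⁻ x, ENNReal.ofReal (f x).toReal ∂μ := by simp [hfin]
    _ = ∫⁻ t in Set.Ioi (0 : ℝ), μ {x | t < (f x).toReal} :=
      lintegral_eq_lintegral_meas_lt μ (.of_forall fun _ ↦ ENNReal.toReal_nonneg)
        hf.ennreal_toReal.aemeasurable
    _ = _ := setLIntegral_congr_fun measurableSet_Ioi fun t ht ↦ by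
      simp only [ENNReal.ofReal_lt_iff_lt_toReal (le_of_lt ht) (hfin _)]

/-- Brunn–Minkowski on the line is additive, so for functions with supremum `1` one even gets the
arithmetic mean on the left-hand side. -/
lemma lintegral_add_lintegral_le_of_iSup_eq_one {f g h : ℝ → ℝ≥0∞} (hf : Measurable f)
    (hg : Measurable g) (hh : Measurable h) (hf₁ : ⨆ x, f x = 1) (hg₁ : ⨆ x, g x = 1)
    (hfg : ∀ x y, f x * g y ≤ h (midpoint ℝ x y) ^ 2) :
    (∫⁻ x, f x) + (∫⁻ x, g x) ≤ 2 * ∫⁻ x, h x := by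
  wlog hh₁ : ∀ x, h x ≤ 1 generalizing h
  · refine (this (hh.min measurable_const) (fun x y ↦ ?_) fun x ↦ min_le_right _ 1).trans
      (by gcongr; exact min_le_left _ _)
    rcases min_choice (h (midpoint ℝ x y)) 1 with hmin | hmin <;> rw [hmin]
    · exact hfg x y
    · simpa using mul_le_mul' ((le_iSup f x).trans hf₁.le) ((le_iSup g y).trans hg₁.le)
  have hlevel_anti : Antitone fun t : ℝ ↦ volume {x | ENNReal.ofReal t < f x} :=
    fun s t hst ↦ measure_mono fun x hx ↦ (ENNReal.ofReal_le_ofReal hst).trans_lt hx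
  rw [lintegral_eq_lintegral_meas_ofReal_lt hf fun x ↦
      ne_top_of_le_ne_top ENNReal.one_ne_top ((le_iSup f x).trans hf₁.le),
    lintegral_eq_lintegral_meas_ofReal_lt hg fun x ↦
      ne_top_of_le_ne_top ENNReal.one_ne_top ((le_iSup g x).trans hg₁.le),
    lintegral_eq_lintegral_meas_ofReal_lt hh fun x ↦
      ne_top_of_le_ne_top ENNReal.one_ne_top (hh₁ x),
    ← lintegral_add_left hlevel_anti.measurable, ← lintegral_const_mul' _ _ (by simp)]
  refine lintegral_mono fun t ↦ ?_
  rcases lt_or_ge (ENNReal.ofReal t) 1 with ht | ht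
  · refine volume_add_volume_le_two_mul_volume_of_midpoint_mem
      (measurableSet_lt measurable_const hf) (measurableSet_lt measurable_const hg)
      (by rwa [← hf₁, lt_iSup_iff] at ht) (by rwa [← hg₁, lt_iSup_iff] at ht) fun x hx y hy ↦ ?_
    refine lt_of_not_ge fun hle : h (midpoint ℝ x y) ≤ ENNReal.ofReal t ↦ ?_
    refine (ENNReal.mul_lt_mul hx hy).not_ge ((hfg x y).trans ?_)
    simpa [sq] using mul_le_mul' hle hle
  · have hf_empty : {x | ENNReal.ofReal t < f x} = ∅ :=
      Set.eq_empty_of_forall_notMem fun x hx ↦ (hx.trans_le ((le_iSup f x).trans hf₁.le)).not_ge ht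
    have hg_empty : {x | ENNReal.ofReal t < g x} = ∅ :=
      Set.eq_empty_of_forall_notMem fun x hx ↦ (hx.trans_le ((le_iSup g x).trans hg₁.le)).not_ge ht
    simp [hf_empty, hg_empty]

lemma mul_le_sq_of_add_le_two_mul {u v w : ℝ≥0∞} (h : u + v ≤ 2 * w) : u * v ≤ w ^ 2 := by
  rcases eq_or_ne w ∞ with rfl | hw
  · simp
  have huv : u + v ≠ ∞ := ne_top_of_le_ne_top (by finiteness) h
  lift u to ℝ≥0 using (ENNReal.add_ne_top.1 huv).1
  lift v to ℝ≥0 using (ENNReal.add_ne_top.1 huv).2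
  lift w to ℝ≥0 using hw
  norm_cast at h ⊢
  rw [← NNReal.coe_le_coe] at h ⊢
  push_cast at h ⊢
  nlinarith [sq_nonneg ((u : ℝ) - v), u.2, v.2, w.2]

lemma lintegral_mul_lintegral_le_sq_of_iSup_ne_top {f g h : ℝ → ℝ≥0∞} (hf : Measurable f)
    (hg : Measurable g) (hh : Measurable h) (hf_top : ⨆ x, f x ≠ ∞) (hg_top : ⨆ x, g x ≠ ∞)
    (hfg : ∀ x y, f x * g y ≤ h (midpoint ℝ x y) ^ 2) :
    (∫⁻ x, f x) * ∫⁻ x, g x ≤ (∫⁻ x, h x) ^ 2 := by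
  set F := ⨆ x, f x with hF
  set G := ⨆ x, g x with hG
  rcases eq_or_ne F 0 with hF₀ | hF₀
  · simp [funext (ENNReal.iSup_eq_zero.1 (hF ▸ hF₀))]
  rcases eq_or_ne G 0 with hG₀ | hG₀
  · simp [funext (ENNReal.iSup_eq_zero.1 (hG ▸ hG₀))]
  obtain ⟨S, hS⟩ : ∃ S : ℝ≥0∞, S ^ 2 = F * G :=
    ⟨(F * G) ^ (1 / 2 : ℝ), by rw [← ENNReal.rpow_natCast, ← ENNReal.rpow_mul]; norm_num⟩
  have hS_inv : (S ^ 2)⁻¹ = F⁻¹ * G⁻¹ := by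
    rw [hS, ENNReal.mul_inv (.inl hF₀) (.inl hf_top)]
  have normalized := lintegral_add_lintegral_le_of_iSup_eq_one (hf.mul_const F⁻¹)
    (hg.mul_const G⁻¹) (hh.mul_const S⁻¹)
    (by rw [← ENNReal.iSup_mul, ENNReal.mul_inv_cancel hF₀ hf_top])
    (by rw [← ENNReal.iSup_mul, ENNReal.mul_inv_cancel hG₀ hg_top]) fun x y ↦ by
      calc f x * F⁻¹ * (g y * G⁻¹) = f x * g y * (S ^ 2)⁻¹ := by rw [hS_inv]; ring
        _ ≤ h (midpoint ℝ x y) ^ 2 * (S ^ 2)⁻¹ := by gcongr; exact hfg x y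
        _ = (h (midpoint ℝ x y) * S⁻¹) ^ 2 := by rw [mul_pow, ENNReal.inv_pow]
  rw [lintegral_mul_const _ hf, lintegral_mul_const _ hg, lintegral_mul_const _ hh] at normalized
  have hS₀ : (S ^ 2)⁻¹ ≠ 0 := by simp [hS, ENNReal.mul_eq_top, hf_top, hg_top]
  have hS_top : (S ^ 2)⁻¹ ≠ ∞ := by simp [hS, hF₀, hG₀]
  rw [← ENNReal.mul_le_mul_iff_left hS₀ hS_top]
  calc (∫⁻ x, f x) * (∫⁻ x, g x) * (S ^ 2)⁻¹
      = (∫⁻ x, f x) * F⁻¹ * ((∫⁻ x, g x) * G⁻¹) := by rw [hS_inv]; ring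
    _ ≤ ((∫⁻ x, h x) * S⁻¹) ^ 2 := mul_le_sq_of_add_le_two_mul normalized
    _ = (∫⁻ x, h x) ^ 2 * (S ^ 2)⁻¹ := by rw [mul_pow, ENNReal.inv_pow]

lemma lintegral_eq_iSup_lintegral_min_natCast {X : Type*} [MeasurableSpace X] {μ : Measure X}
    {f : X → ℝ≥0∞} (hf : Measurable f) : ∫⁻ x, f x ∂μ = ⨆ N : ℕ, ∫⁻ x, min (f x) N ∂μ := by
  rw [← lintegral_iSup (fun N ↦ hf.min measurable_const)
    fun M N hMN x ↦ min_le_min le_rfl (by exact_mod_cast hMN)]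
  simp only [← inf_iSup_eq, ENNReal.iSup_natCast, le_top, inf_of_le_left]

lemma lintegral_mul_lintegral_le_sq_real {f g h : ℝ → ℝ≥0∞} (hf : Measurable f)
    (hg : Measurable g) (hh : Measurable h)
    (hfg : ∀ x y, f x * g y ≤ h (midpoint ℝ x y) ^ 2) :
    (∫⁻ x, f x) * ∫⁻ x, g x ≤ (∫⁻ x, h x) ^ 2 := by
  have iSup_min_ne_top (u : ℝ → ℝ≥0∞) (N : ℕ) : ⨆ x, min (u x) N ≠ ∞ :=
    ne_top_of_le_ne_top (ENNReal.natCast_ne_top N) (iSup_le fun _ ↦ min_le_right _ _)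
  rw [lintegral_eq_iSup_lintegral_min_natCast hf, lintegral_eq_iSup_lintegral_min_natCast hg]
  simp only [ENNReal.iSup_mul, ENNReal.mul_iSup, iSup_le_iff]
  intro M N
  exact lintegral_mul_lintegral_le_sq_of_iSup_ne_top (hf.min measurable_const)
    (hg.min measurable_const) hh (iSup_min_ne_top f N) (iSup_min_ne_top g M) fun x y ↦
      (mul_le_mul' (min_le_left _ _) (min_le_left _ _)).trans (hfg x y)

end PrekopaLeindlerReal

lemma exists_measurable_ge_ae_eq {X : Type*} [MeasurableSpace X] {μ : Measure X} {f : X → ℝ≥0∞}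
    (hf : AEMeasurable f μ) : ∃ g, Measurable g ∧ f ≤ g ∧ f =ᵐ[μ] g := by
  classical
  set s := toMeasurable μ {x | f x ≠ hf.mk f x}
  have hs₀ : μ s = 0 := by rw [measure_toMeasurable]; exact hf.ae_eq_mk
  have hs (x) (hx : x ∉ s) : f x = hf.mk f x :=
    not_not.1 fun hne ↦ hx (subset_toMeasurable _ _ hne)
  refine ⟨s.piecewise (fun _ ↦ ∞) (hf.mk f), Measurable.piecewise (measurableSet_toMeasurable _ _)
    measurable_const hf.measurable_mk, fun x ↦ ?_, ?_⟩
  · by_cases hx : x ∈ s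
    · simp [hx]
    · simp [hx, hs x hx]
  · filter_upwards [measure_eq_zero_iff_ae_notMem.1 hs₀] with x hx
    simp [hx, hs x hx]

/-- A measure on a real vector space satisfies the Prékopa–Leindler inequality, in its
multiplicative midpoint form. By the theorem of Prékopa and Leindler this holds for every
log-concave measure; only measurable test functions are quantified over. -/
def IsPrekopaLeindler {E : Type*} [AddCommGroup E] [Module ℝ E] [MeasurableSpace E]
    (μ : Measure E) : Prop :=
  ∀ ⦃f g h : E → ℝ≥0∞⦄, Measurable f → Measurable g → Measurable h →
    (∀ x y, f x * g y ≤ h (midpoint ℝ x y) ^ 2) →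
      (∫⁻ x, f x ∂μ) * ∫⁻ x, g x ∂μ ≤ (∫⁻ x, h x ∂μ) ^ 2

namespace IsPrekopaLeindler

section VectorSpace

variable {E F : Type*} [AddCommGroup E] [Module ℝ E] [MeasurableSpace E]
  [AddCommGroup F] [Module ℝ F] [MeasurableSpace F] {μ : Measure E} {ν : Measure F}

lemma map (hμ : IsPrekopaLeindler μ) (L : E →ₗ[ℝ] F) (hL : Measurable L) :
    IsPrekopaLeindler (μ.map L) := by
  intro f g h hf hg hh hfg
  rw [lintegral_map hf hL, lintegral_map hg hL, lintegral_map hh hL]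
  refine hμ (hf.comp hL) (hg.comp hL) (hh.comp hL) fun x y ↦ (hfg (L x) (L y)).trans_eq ?_
  rw [← L.coe_toAffineMap, L.toAffineMap.map_midpoint]

lemma prod [SFinite ν] (hμ : IsPrekopaLeindler μ) (hν : IsPrekopaLeindler ν) :
    IsPrekopaLeindler (μ.prod ν) := by
  intro f g h hf hg hh hfg
  rw [lintegral_prod _ hf.aemeasurable, lintegral_prod _ hg.aemeasurable,
    lintegral_prod _ hh.aemeasurable]
  exact hμ hf.lintegral_prod_right' hg.lintegral_prod_right' hh.lintegral_prod_right' fun x y ↦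
    hν (hf.comp measurable_prodMk_left) (hg.comp measurable_prodMk_left)
      (hh.comp measurable_prodMk_left) fun u v ↦ hfg (x, u) (y, v)

lemma lintegral_mul_lintegral_le_sq (hμ : IsPrekopaLeindler μ) {f g h : E → ℝ≥0∞}
    (hh : AEMeasurable h μ) (hfg : ∀ x y, f x * g y ≤ h (midpoint ℝ x y) ^ 2) :
    (∫⁻ x, f x ∂μ) * ∫⁻ x, g x ∂μ ≤ (∫⁻ x, h x ∂μ) ^ 2 := by
  obtain ⟨f', hf', hf'_le, hf'_eq⟩ := exists_measurable_le_lintegral_eq (μ := μ) f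
  obtain ⟨g', hg', hg'_le, hg'_eq⟩ := exists_measurable_le_lintegral_eq (μ := μ) g
  obtain ⟨h', hh', hh'_le, hh'_eq⟩ := exists_measurable_ge_ae_eq hh
  rw [hf'_eq, hg'_eq, lintegral_congr_ae hh'_eq]
  refine hμ hf' hg' hh' fun x y ↦ ?_
  calc f' x * g' y ≤ f x * g y := mul_le_mul' (hf'_le x) (hg'_le y)
    _ ≤ h (midpoint ℝ x y) ^ 2 := hfg x y
    _ ≤ h' (midpoint ℝ x y) ^ 2 := pow_le_pow_left' (hh'_le _) 2

lemma withDensity (hμ : IsPrekopaLeindler μ) {ρ : E → ℝ≥0∞} (hρ : AEMeasurable ρ μ)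
    (hρ_mid : ∀ x y, ρ x * ρ y ≤ ρ (midpoint ℝ x y) ^ 2) :
    IsPrekopaLeindler (μ.withDensity ρ) := by
  intro f g h hf hg hh hfg
  simp only [lintegral_withDensity_eq_lintegral_mul₀ hρ, hf.aemeasurable, hg.aemeasurable,
    hh.aemeasurable]
  refine hμ.lintegral_mul_lintegral_le_sq (hρ.mul hh.aemeasurable) fun x y ↦ ?_
  calc ρ x * f x * (ρ y * g y) = ρ x * ρ y * (f x * g y) := by ring
    _ ≤ ρ (midpoint ℝ x y) ^ 2 * h (midpoint ℝ x y) ^ 2 := mul_le_mul' (hρ_mid x y) (hfg x y)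
    _ = (ρ (midpoint ℝ x y) * h (midpoint ℝ x y)) ^ 2 := (mul_pow ..).symm

lemma restrict (hμ : IsPrekopaLeindler μ) {K : Set E} (hK : Convex ℝ K)
    (hK_meas : MeasurableSet K) : IsPrekopaLeindler (μ.restrict K) := by
  rw [← withDensity_indicator_one hK_meas]
  refine hμ.withDensity (measurable_one.indicator hK_meas).aemeasurable fun x y ↦ ?_
  by_cases hx : x ∈ K
  · by_cases hy : y ∈ K
    · simp [hx, hy, hK.midpoint_mem hx hy]
    · simp [hy]
  · simp [hx]

end VectorSpace

end IsPrekopaLeindler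

lemma isPrekopaLeindler_volume_pi (n : ℕ) : IsPrekopaLeindler (volume : Measure (Fin n → ℝ)) := by
  induction n with
  | zero =>
    intro f g h _ _ _ hfg
    simp only [volume_pi, Measure.pi_of_empty _ (0 : Fin 0 → ℝ), lintegral_dirac]
    simpa using hfg 0 0
  | succ n ih =>
    have hvol : IsPrekopaLeindler (volume : Measure ℝ) :=
      fun _ _ _ ↦ lintegral_mul_lintegral_le_sq_real
    have hmp := (volume_preserving_piFinSuccAbove (fun _ : Fin (n + 1) ↦ ℝ) 0).symm
    have hcons : ⇑(MeasurableEquiv.piFinSuccAbove (fun _ : Fin (n + 1) ↦ ℝ) 0).symm =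
        Fin.consLinearEquiv ℝ fun _ : Fin (n + 1) ↦ ℝ := by
      ext x i
      refine Fin.cases ?_ (fun j ↦ ?_) i <;> simp
    rw [hcons] at hmp
    rw [← hmp.map_eq]
    exact (hvol.prod ih).map (Fin.consLinearEquiv ℝ fun _ ↦ ℝ).toLinearMap hmp.measurable

lemma isPrekopaLeindler_volume {E : Type*} [NormedAddCommGroup E] [InnerProductSpace ℝ E]
    [FiniteDimensional ℝ E] [MeasurableSpace E] [BorelSpace E] :
    IsPrekopaLeindler (volume : Measure E) := by
  have hmp := (stdOrthonormalBasis ℝ E).measurePreserving_repr_symm.comp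
    (PiLp.volume_preserving_toLp (Fin (Module.finrank ℝ E)))
  rw [← hmp.map_eq]
  exact (isPrekopaLeindler_volume_pi _).map ((WithLp.linearEquiv 2 ℝ _).symm.trans
    (stdOrthonormalBasis ℝ E).repr.symm.toLinearEquiv).toLinearMap hmp.measurable

namespace IsLogConcaveFn

lemma convex_setOf_lt {E : Type*} [AddCommGroup E] [Module ℝ E] {f : E → ℝ}
    (hf : IsLogConcaveFn f) (c : ℝ) : Convex ℝ {x | c < f x} := by
  intro x hx y hy a b ha hb hab
  obtain rfl : b = 1 - a := by linarith
  set m := min (f x) (f y)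
  have hm₀ : 0 ≤ m := le_min (hf.1 x) (hf.1 y)
  rcases hm₀.eq_or_lt with hm | hm
  · exact (lt_min hx hy).trans_le (hm ▸ hf.1 _)
  · calc c < m := lt_min hx hy
      _ = m ^ a * m ^ (1 - a) := by rw [← rpow_add hm]; simp
      _ ≤ f x ^ a * f y ^ (1 - a) := by
        gcongr
        exacts [rpow_nonneg (hf.1 x) _, min_le_left _ _, min_le_right _ _]
      _ ≤ f (a • x + (1 - a) • y) := hf.2 x y a ha (by linarith)

lemma mul_le_sq_midpoint {E : Type*} [AddCommGroup E] [Module ℝ E] {f : E → ℝ}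
    (hf : IsLogConcaveFn f) (x y : E) : f x * f y ≤ f (midpoint ℝ x y) ^ 2 := by
  have hmid : (1 / 2 : ℝ) • x + (1 - 1 / 2 : ℝ) • y = midpoint ℝ x y := by
    rw [midpoint_eq_smul_add, smul_add]; norm_num
  have h := hf.2 x y (1 / 2) (by norm_num) (by norm_num)
  rw [hmid, sub_half, ← mul_rpow (hf.1 x) (hf.1 y), ← sqrt_eq_rpow] at h
  rwa [← Real.sqrt_le_left (hf.1 _)]

lemma aemeasurable {E : Type*} [NormedAddCommGroup E] [NormedSpace ℝ E] [FiniteDimensional ℝ E]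
    [MeasurableSpace E] [BorelSpace E] {f : E → ℝ} (hf : IsLogConcaveFn f) (μ : Measure E)
    [μ.IsAddHaarMeasure] : AEMeasurable f μ := by
  have hnull : NullMeasurable f μ :=
    @measurable_of_Ioi ℝ (NullMeasurableSpace E μ) _ _ _ _ _ _ _ f fun c ↦
      (hf.convex_setOf_lt c).nullMeasurableSet μ
  exact hnull.aemeasurable

lemma isPrekopaLeindler_withDensity {E : Type*} [NormedAddCommGroup E] [InnerProductSpace ℝ E]
    [FiniteDimensional ℝ E] [MeasurableSpace E] [BorelSpace E] {f : E → ℝ}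
    (hf : IsLogConcaveFn f) :
    IsPrekopaLeindler (volume.withDensity fun x ↦ ENNReal.ofReal (f x)) := by
  refine isPrekopaLeindler_volume.withDensity (hf.aemeasurable volume).ennreal_ofReal fun x y ↦ ?_
  rw [← ENNReal.ofReal_mul (hf.1 x), ← ENNReal.ofReal_pow (hf.1 _)]
  exact ENNReal.ofReal_le_ofReal (hf.mul_le_sq_midpoint x y)

end IsLogConcaveFn

/-! ### Borell's lemma -/

section Borell

variable {E : Type*} [NormedAddCommGroup E]

/-- The closed annulus around the origin with inner radius `lo` and outer radius `hi`. -/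
def annulus (E : Type*) [NormedAddCommGroup E] (lo hi : ℝ) : Set E :=
  norm ⁻¹' Set.Icc lo hi

lemma measurableSet_annulus [MeasurableSpace E] [OpensMeasurableSpace E] (lo hi : ℝ) :
    MeasurableSet (annulus E lo hi) :=
  measurable_norm measurableSet_Icc

lemma annulus_subset_annulus {lo lo' hi hi' : ℝ} (hlo : lo' ≤ lo) (hhi : hi ≤ hi') :
    annulus E lo hi ⊆ annulus E lo' hi' :=
  Set.preimage_mono (Set.Icc_subset_Icc hlo hhi)

lemma midpoint_mem_annulus [NormedSpace ℝ E] {lo hi r : ℝ} {x y : E} (hx : x ∈ annulus E lo hi)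
    (hy : y ∈ Metric.closedBall (0 : E) (2 * r)) :
    midpoint ℝ x y ∈ annulus E (lo / 2 - r) (hi / 2 + r) := by
  have hnorm : ‖midpoint ℝ x y‖ = ‖x + y‖ / 2 := by
    rw [midpoint_eq_smul_add, norm_smul, invOf_eq_inv, norm_inv, norm_ofNat]
    ring
  have hlower : ‖x‖ - ‖y‖ ≤ ‖x + y‖ := by simpa using norm_sub_norm_le x (-y)
  have hupper := norm_add_le x y
  rw [mem_closedBall_zero_iff] at hy
  constructor <;> linarith [hx.1, hx.2]

lemma setOf_le_norm_subset_iUnion_dyadic_annulus {s : ℝ} (hs : 0 < s) :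
    {z : E | s ≤ ‖z‖} ⊆ ⋃ i : ℕ, annulus E (s * 2 ^ i) (2 * s * 2 ^ i) := by
  intro z (hz : s ≤ ‖z‖)
  obtain ⟨i, hi_le, hi_lt⟩ := exists_nat_pow_near ((one_le_div hs).2 hz) one_lt_two
  rw [le_div_iff₀ hs] at hi_le
  rw [div_lt_iff₀ hs, pow_succ] at hi_lt
  exact Set.mem_iUnion.2 ⟨i, by linarith, by linarith⟩

namespace IsPrekopaLeindler

variable [MeasurableSpace E] {μ : Measure E}

lemma measure_mul_measure_le_sq {V : Type*} [AddCommGroup V] [Module ℝ V] [MeasurableSpace V]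
    {μ : Measure V} (hμ : IsPrekopaLeindler μ) {s t u : Set V} (hs : MeasurableSet s)
    (ht : MeasurableSet t) (hu : MeasurableSet u)
    (hstu : ∀ x ∈ s, ∀ y ∈ t, midpoint ℝ x y ∈ u) : μ s * μ t ≤ μ u ^ 2 := by
  rw [← lintegral_indicator_one hs, ← lintegral_indicator_one ht, ← lintegral_indicator_one hu]
  refine hμ (measurable_one.indicator hs) (measurable_one.indicator ht)
    (measurable_one.indicator hu) fun x y ↦ ?_
  by_cases hx : x ∈ s
  · by_cases hy : y ∈ t
    · simp [hx, hy, hstu x hx y hy]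
    · simp [hy]
  · simp [hx]

variable [NormedSpace ℝ E] [OpensMeasurableSpace E]

lemma measure_annulus_mul_pow_le (hμ : IsPrekopaLeindler μ) (r : ℝ) (j : ℕ) (lo hi : ℝ) :
    μ (annulus E lo hi) * μ (Metric.closedBall 0 (2 * r)) ^ (2 ^ j - 1) ≤
      μ (annulus E (lo / 2 ^ j - 2 * r * (1 - 1 / 2 ^ j))
        (hi / 2 ^ j + 2 * r * (1 - 1 / 2 ^ j))) ^ 2 ^ j := by
  induction j generalizing lo hi with
  | zero => simp
  | succ j ih =>
    have hstep : μ (annulus E lo hi) * μ (Metric.closedBall 0 (2 * r)) ≤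
        μ (annulus E (lo / 2 - r) (hi / 2 + r)) ^ 2 :=
      hμ.measure_mul_measure_le_sq (measurableSet_annulus _ _)
        Metric.isClosed_closedBall.measurableSet (measurableSet_annulus _ _) fun x hx y hy ↦
          midpoint_mem_annulus hx hy
    have hexp : 2 ^ (j + 1) - 1 = 1 + (2 ^ j - 1) * 2 := by
      have := Nat.one_le_two_pow (n := j)
      rw [pow_succ]; omega
    have hlo : lo / 2 ^ (j + 1) - 2 * r * (1 - 1 / 2 ^ (j + 1)) =
        (lo / 2 - r) / 2 ^ j - 2 * r * (1 - 1 / 2 ^ j) := by field_simp; ring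
    have hhi : hi / 2 ^ (j + 1) + 2 * r * (1 - 1 / 2 ^ (j + 1)) =
        (hi / 2 + r) / 2 ^ j + 2 * r * (1 - 1 / 2 ^ j) := by field_simp; ring
    rw [hlo, hhi, hexp, pow_add, pow_one, pow_mul, ← mul_assoc, pow_succ 2 j, pow_mul]
    calc μ (annulus E lo hi) * μ (Metric.closedBall 0 (2 * r)) *
          (μ (Metric.closedBall 0 (2 * r)) ^ (2 ^ j - 1)) ^ 2
        ≤ μ (annulus E (lo / 2 - r) (hi / 2 + r)) ^ 2 *
          (μ (Metric.closedBall 0 (2 * r)) ^ (2 ^ j - 1)) ^ 2 := by gcongr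
      _ = (μ (annulus E (lo / 2 - r) (hi / 2 + r)) *
          μ (Metric.closedBall 0 (2 * r)) ^ (2 ^ j - 1)) ^ 2 := (mul_pow ..).symm
      _ ≤ _ := pow_le_pow_left' (ih _ _) 2

variable [IsProbabilityMeasure μ] {r : ℝ}

lemma measureReal_dyadic_annulus_le (hμ : IsPrekopaLeindler μ) (hr : 0 ≤ r)
    (hball : 3 / 4 ≤ μ.real (Metric.closedBall 0 (2 * r))) (j : ℕ) :
    μ.real (annulus E (7 * 2 ^ j * r) (14 * 2 ^ j * r)) ≤
      (4 / 3 * μ.real (annulus E (5 * r) (16 * r))) ^ 2 ^ j := by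
  have hsub : annulus E (7 * 2 ^ j * r / 2 ^ j - 2 * r * (1 - 1 / 2 ^ j))
      (14 * 2 ^ j * r / 2 ^ j + 2 * r * (1 - 1 / 2 ^ j)) ⊆ annulus E (5 * r) (16 * r) := by
    have : 0 ≤ r * (1 / 2 ^ j) := by positivity
    apply annulus_subset_annulus <;> field_simp at this ⊢ <;> nlinarith
  have hiter := ENNReal.toReal_mono (by finiteness)
    (hμ.measure_annulus_mul_pow_le r j (7 * 2 ^ j * r) (14 * 2 ^ j * r))
  rw [ENNReal.toReal_mul, ENNReal.toReal_pow, ENNReal.toReal_pow] at hiter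
  rw [mul_pow, ← inv_div, inv_pow, ← div_eq_inv_mul, le_div_iff₀ (by positivity)]
  calc μ.real (annulus E (7 * 2 ^ j * r) (14 * 2 ^ j * r)) * (3 / 4) ^ 2 ^ j
      ≤ μ.real (annulus E (7 * 2 ^ j * r) (14 * 2 ^ j * r)) *
        μ.real (Metric.closedBall 0 (2 * r)) ^ (2 ^ j - 1) := by
        gcongr
        calc (3 / 4 : ℝ) ^ 2 ^ j ≤ (3 / 4) ^ (2 ^ j - 1) :=
              pow_le_pow_of_le_one (by norm_num) (by norm_num) (Nat.sub_le _ _)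
          _ ≤ _ := by gcongr
    _ ≤ _ := hiter
    _ ≤ μ.real (annulus E (5 * r) (16 * r)) ^ 2 ^ j := by gcongr; exact measureReal_mono hsub

lemma measureReal_dyadic_tail_le (hμ : IsPrekopaLeindler μ) (hr : 0 < r)
    (hball : 3 / 4 ≤ μ.real (Metric.closedBall 0 (2 * r))) {q : ℝ}
    (hq : 4 / 3 * μ.real (annulus E (5 * r) (16 * r)) ≤ q) (hq_half : q ≤ 1 / 2) (J : ℕ) :
    μ.real {z | 7 * 2 ^ J * r ≤ ‖z‖} ≤ 2 * q ^ 2 ^ J := by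
  have hq₀ : 0 ≤ q := le_trans (by positivity) hq
  have hterm (i : ℕ) : μ (annulus E (7 * 2 ^ J * r * 2 ^ i) (2 * (7 * 2 ^ J * r) * 2 ^ i)) ≤
      ENNReal.ofReal (q ^ 2 ^ J * (1 / 2) ^ i) := by
    rw [← ofReal_measureReal]
    refine ENNReal.ofReal_le_ofReal ?_
    have hpow : 2 ^ J + i ≤ 2 ^ (J + i) := by
      rw [pow_add]
      nlinarith [Nat.one_le_two_pow (n := J), (Nat.lt_two_pow_self : i < 2 ^ i)]
    calc μ.real (annulus E (7 * 2 ^ J * r * 2 ^ i) (2 * (7 * 2 ^ J * r) * 2 ^ i))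
        = μ.real (annulus E (7 * 2 ^ (J + i) * r) (14 * 2 ^ (J + i) * r)) := by
          congr 2 <;> ring
      _ ≤ (4 / 3 * μ.real (annulus E (5 * r) (16 * r))) ^ 2 ^ (J + i) :=
        hμ.measureReal_dyadic_annulus_le hr.le hball _
      _ ≤ q ^ 2 ^ (J + i) := by gcongr
      _ ≤ q ^ (2 ^ J + i) := pow_le_pow_of_le_one hq₀ (by linarith) hpow
      _ = q ^ 2 ^ J * q ^ i := pow_add _ _ _
      _ ≤ q ^ 2 ^ J * (1 / 2) ^ i := by gcongr
  have hsum : HasSum (fun i : ℕ ↦ q ^ 2 ^ J * (1 / 2 : ℝ) ^ i) (2 * q ^ 2 ^ J) := by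
    rw [mul_comm 2]
    exact hasSum_geometric_two.mul_left _
  refine ENNReal.toReal_le_of_le_ofReal (by positivity) ?_
  calc μ {z | 7 * 2 ^ J * r ≤ ‖z‖}
      ≤ ∑' i : ℕ, μ (annulus E (7 * 2 ^ J * r * 2 ^ i) (2 * (7 * 2 ^ J * r) * 2 ^ i)) :=
        (measure_mono (setOf_le_norm_subset_iUnion_dyadic_annulus (by positivity))).trans
          (measure_iUnion_le _)
    _ ≤ ∑' i : ℕ, ENNReal.ofReal (q ^ 2 ^ J * (1 / 2) ^ i) := ENNReal.tsum_le_tsum hterm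
    _ = ENNReal.ofReal (2 * q ^ 2 ^ J) := by
      rw [← ENNReal.ofReal_tsum_of_nonneg (fun i ↦ by positivity) hsum.summable, hsum.tsum_eq]

/-- A version of Borell's lemma whose rate is governed by the mass of a single annulus, so that no
bound on the mass outside a large ball is needed to start with. -/
lemma measureReal_norm_ge_le (hμ : IsPrekopaLeindler μ) (hr : 0 < r)
    (hball : 3 / 4 ≤ μ.real (Metric.closedBall 0 (2 * r))) {L : ℝ}
    (hL : 4 / 3 * μ.real (annulus E (5 * r) (16 * r)) ≤ exp (-L)) (hL_half : exp (-L) ≤ 1 / 2)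
    {s : ℝ} (hs : 7 * r ≤ s) : μ.real {z | s ≤ ‖z‖} ≤ 2 * exp (-(L * (s / (14 * r)))) := by
  have hL₀ : 0 ≤ L := by
    have := exp_le_one_iff.1 (hL_half.trans (by norm_num))
    linarith
  obtain ⟨J, hJ_le, hJ_lt⟩ :=
    exists_nat_pow_near ((one_le_div (show 0 < 7 * r by positivity)).2 hs) one_lt_two
  rw [le_div_iff₀ (by positivity)] at hJ_le
  rw [div_lt_iff₀ (by positivity), pow_succ] at hJ_lt
  calc μ.real {z | s ≤ ‖z‖} ≤ μ.real {z | 7 * 2 ^ J * r ≤ ‖z‖} :=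
        measureReal_mono fun z (hz : s ≤ ‖z‖) ↦ show 7 * 2 ^ J * r ≤ ‖z‖ by linarith
    _ ≤ 2 * exp (-L) ^ 2 ^ J := hμ.measureReal_dyadic_tail_le hr hball hL hL_half J
    _ = 2 * exp (-(L * 2 ^ J)) := by rw [← exp_nat_mul]; push_cast; ring_nf
    _ ≤ 2 * exp (-(L * (s / (14 * r)))) := by
      gcongr
      rw [div_le_iff₀ (by positivity)]
      linarith

end IsPrekopaLeindler

end Borell

lemma lintegral_rpow_le_of_exp_tail {X : Type*} [MeasurableSpace X] {μ : Measure X}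
    [IsFiniteMeasure μ] {f : X → ℝ} (hf : AEMeasurable f μ) (hf₀ : 0 ≤ f) {C l p : ℝ}
    (hC : 0 ≤ C) (hl : 0 < l) (hp : 0 < p)
    (htail : ∀ t, 0 < t → μ.real {x | t ≤ f x} ≤ C * exp (-(l * t))) :
    ∫⁻ x, ENNReal.ofReal (f x ^ p) ∂μ ≤ ENNReal.ofReal (C * (p * ((1 / l) ^ p * Gamma p))) := by
  have hint : IntegrableOn (fun t : ℝ ↦ t ^ (p - 1) * exp (-(l * t))) (Set.Ioi 0) := by
    simpa using
      integrableOn_rpow_mul_exp_neg_mul_rpow (s := p - 1) (p := 1) (by linarith) one_pos hl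
  rw [lintegral_rpow_eq_lintegral_meas_le_mul _ (.of_forall hf₀) hf hp]
  calc ENNReal.ofReal p * ∫⁻ t in Set.Ioi 0, μ {x | t ≤ f x} * ENNReal.ofReal (t ^ (p - 1))
      ≤ ENNReal.ofReal p *
        ∫⁻ t in Set.Ioi 0, ENNReal.ofReal (C * (t ^ (p - 1) * exp (-(l * t)))) := by
        refine mul_le_mul' le_rfl (setLIntegral_mono' measurableSet_Ioi fun t ht ↦ ?_)
        have ht₀ : 0 ≤ t ^ (p - 1) := rpow_nonneg (le_of_lt ht) _
        rw [← ofReal_measureReal, ← ENNReal.ofReal_mul measureReal_nonneg]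
        exact ENNReal.ofReal_le_ofReal (by nlinarith [htail t ht])
    _ = ENNReal.ofReal (p * ∫ t in Set.Ioi 0, C * (t ^ (p - 1) * exp (-(l * t)))) := by
        rw [ENNReal.ofReal_mul hp.le, ofReal_integral_eq_lintegral_ofReal (hint.const_mul C)]
        filter_upwards [ae_restrict_mem measurableSet_Ioi] with t (ht : 0 < t)
        positivity
    _ = _ := by
        rw [integral_const_mul, integral_rpow_mul_exp_neg_mul_Ioi hp hl]
        ring_nf

/-! ### Gaussian averages -/

lemma cexp_neg_sq_div_two_eq_integral (u : ℝ) :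
    Complex.exp (-(u : ℂ) ^ 2 / 2) =
      ∫ x : ℝ, Complex.exp (x * u * Complex.I) ∂gaussianReal 0 1 := by
  simpa [charFun_apply_real, mul_comm, neg_div] using
    (charFun_gaussianReal (μ := 0) (v := 1) u).symm

lemma cpow_pi_div_neg_neg_half {v : ℝ} (hv : 0 < v) :
    ((π : ℂ) / -((-(v / 2) : ℝ) : ℂ)) ^ (1 / 2 : ℂ) = (√(2 * π) * (√v)⁻¹ : ℝ) := by
  have hsqrt : √(2 * π) * (√v)⁻¹ = (2 * π / v) ^ (1 / 2 : ℝ) := by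
    rw [← Real.sqrt_eq_rpow, Real.sqrt_div (by positivity), div_eq_mul_inv]
  rw [hsqrt, Complex.ofReal_cpow (by positivity)]
  push_cast
  congr 1
  field_simp

lemma integral_cexp_quadratic_gaussianReal {v : ℝ} (hv : 0 < v) (c d : ℂ) :
    ∫ x : ℝ, Complex.exp (-((v - 1) / 2 : ℝ) * (x : ℂ) ^ 2 + c * x + d) ∂gaussianReal 0 1 =
      ((√v)⁻¹ : ℝ) * Complex.exp (d + c ^ 2 / (2 * v)) := by
  have hv' : (v : ℂ) ≠ 0 := by exact_mod_cast hv.ne'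
  have hsqrt : (√(2 * π) : ℂ) ≠ 0 := by exact_mod_cast (by positivity : √(2 * π) ≠ 0)
  have hdensity (x : ℝ) : gaussianPDFReal 0 1 x •
      Complex.exp (-((v - 1) / 2 : ℝ) * (x : ℂ) ^ 2 + c * x + d) =
        ((√(2 * π))⁻¹ : ℝ) * Complex.exp ((-(v / 2) : ℝ) * (x : ℂ) ^ 2 + c * x + d) := by
    rw [gaussianPDFReal, Complex.real_smul]
    push_cast
    rw [mul_assoc, ← Complex.exp_add]
    simp only [mul_one, sub_zero]
    ring_nf
  have hexponent : d - c ^ 2 / (4 * ((-(v / 2) : ℝ) : ℂ)) = d + c ^ 2 / (2 * v) := by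
    push_cast
    field_simp
    ring
  simp_rw [integral_gaussianReal_eq_integral_smul one_ne_zero, hdensity]
  rw [integral_const_mul, integral_cexp_quadratic (by simpa using hv),
    cpow_pi_div_neg_neg_half hv, hexponent]
  push_cast
  field_simp

section GaussianAverage

variable {E : Type*} [NormedAddCommGroup E]

/-- The norm of the vector `(1, z)` of `ℝ × E`, which is also the standard deviation of
`N + ⟪G, z⟫` for independent standard Gaussians `N` and `G`. -/
def liftedNorm (z : E) : ℝ := √(1 + ‖z‖ ^ 2)

lemma liftedNorm_sq (z : E) : liftedNorm z ^ 2 = 1 + ‖z‖ ^ 2 :=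
  Real.sq_sqrt (by positivity)

lemma liftedNorm_pos (z : E) : 0 < liftedNorm z :=
  Real.sqrt_pos.2 (by positivity)

lemma one_le_liftedNorm (z : E) : 1 ≤ liftedNorm z :=
  Real.one_le_sqrt.2 (le_add_of_nonneg_right (by positivity))

lemma measurable_liftedNorm [MeasurableSpace E] [OpensMeasurableSpace E] :
    Measurable (liftedNorm : E → ℝ) := by
  unfold liftedNorm
  fun_prop

variable [InnerProductSpace ℝ E]

lemma one_add_abs_inner_le_liftedNorm_mul (z w : E) :
    1 + |⟪z, w⟫| ≤ liftedNorm z * liftedNorm w := by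
  have hsq : (1 + ‖z‖ * ‖w‖) ^ 2 ≤ (liftedNorm z * liftedNorm w) ^ 2 := by
    rw [mul_pow, liftedNorm_sq, liftedNorm_sq]
    nlinarith [sq_nonneg (‖z‖ - ‖w‖)]
  have hpos := mul_pos (liftedNorm_pos z) (liftedNorm_pos w)
  linarith [abs_real_inner_le_norm z w, le_of_sq_le_sq hsq hpos.le]

/-- The determinant of `1 + Gram(z, w)`, that is, of the covariance matrix of
`(N₁ + ⟪G, z⟫, N₂ + ⟪G, w⟫)` for independent standard Gaussians `N₁`, `N₂` and `G`. -/
def liftedGram (z w : E) : ℝ := liftedNorm z ^ 2 * liftedNorm w ^ 2 - ⟪z, w⟫ ^ 2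

lemma liftedGram_eq_mul (z w : E) : liftedGram z w =
    (liftedNorm z * liftedNorm w + |⟪z, w⟫|) * (liftedNorm z * liftedNorm w - |⟪z, w⟫|) := by
  rw [liftedGram, ← sq_abs ⟪z, w⟫]
  ring

lemma liftedNorm_mul_add_abs_inner_le_liftedGram (z w : E) :
    liftedNorm z * liftedNorm w + |⟪z, w⟫| ≤ liftedGram z w := by
  have hinner := one_add_abs_inner_le_liftedNorm_mul z w
  rw [liftedGram_eq_mul]
  exact le_mul_of_one_le_right (by linarith [abs_nonneg ⟪z, w⟫]) (by linarith)

lemma liftedNorm_mul_le_liftedGram (z w : E) : liftedNorm z * liftedNorm w ≤ liftedGram z w := by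
  linarith [liftedNorm_mul_add_abs_inner_le_liftedGram z w, abs_nonneg ⟪z, w⟫]

lemma liftedGram_pos (z w : E) : 0 < liftedGram z w :=
  (mul_pos (liftedNorm_pos z) (liftedNorm_pos w)).trans_le (liftedNorm_mul_le_liftedGram z w)

lemma inv_sqrt_liftedGram_le (z w : E) : (√(liftedGram z w))⁻¹ ≤
    exp |⟪z, w⟫| / (liftedNorm z * liftedNorm w + |⟪z, w⟫|) := by
  have hinner := one_add_abs_inner_le_liftedNorm_mul z w
  have hD := liftedGram_pos z w
  have hD_eq := liftedGram_eq_mul z w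
  set c := |⟪z, w⟫|
  set g := liftedNorm z * liftedNorm w + c
  have hc₀ : 0 ≤ c := abs_nonneg ⟪z, w⟫
  have hg₀ : 0 < g := by linarith
  have hlinear : g ≤ exp (2 * c) * (liftedNorm z * liftedNorm w - c) := by
    calc g ≤ (2 * c + 1) * (liftedNorm z * liftedNorm w - c) := by nlinarith
      _ ≤ _ := by
        gcongr
        · linarith
        · exact add_one_le_exp _
  have hsq : g ^ 2 ≤ (exp c * √(liftedGram z w)) ^ 2 := by
    rw [mul_pow, Real.sq_sqrt hD.le, ← exp_nat_mul, hD_eq]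
    push_cast
    nlinarith
  have hle : g ≤ exp c * √(liftedGram z w) := le_of_sq_le_sq hsq (by positivity)
  rwa [inv_le_iff_one_le_mul₀ (by positivity), div_mul_eq_mul_div, one_le_div₀ hg₀]

lemma le_neg_div_liftedGram {z w : E} {a b : ℝ} (ha : 0 ≤ a) (hb : 0 ≤ b) (hz : a ≤ liftedNorm z)
    (hw : b ≤ liftedNorm w) :
    -(a ^ 2 / (2 * liftedNorm z ^ 2)) - b ^ 2 / (2 * liftedNorm w ^ 2) - 2 * |⟪z, w⟫| ≤
      -(a ^ 2 * liftedNorm w ^ 2 + b ^ 2 * liftedNorm z ^ 2 - 2 * a * b * ⟪z, w⟫) /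
        (2 * liftedGram z w) := by
  have hV := liftedNorm_pos z
  have hW := liftedNorm_pos w
  have hD := liftedGram_pos z w
  have hVW := liftedNorm_mul_le_liftedGram z w
  have hcD : |⟪z, w⟫| ≤ liftedGram z w := by
    linarith [liftedNorm_mul_add_abs_inner_le_liftedGram z w, mul_pos hV hW]
  have hsplit : -(a ^ 2 * liftedNorm w ^ 2 + b ^ 2 * liftedNorm z ^ 2 - 2 * a * b * ⟪z, w⟫) /
      (2 * liftedGram z w) =
      -(a ^ 2 / (2 * liftedNorm z ^ 2)) - b ^ 2 / (2 * liftedNorm w ^ 2) -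
        (a ^ 2 / liftedNorm z ^ 2 + b ^ 2 / liftedNorm w ^ 2) / 2 *
          (⟪z, w⟫ ^ 2 / liftedGram z w) +
        a * b / liftedGram z w * ⟪z, w⟫ := by
    field_simp
    rw [liftedGram]
    ring
  have hmean : (a ^ 2 / liftedNorm z ^ 2 + b ^ 2 / liftedNorm w ^ 2) / 2 ≤ 1 := by
    have ha' : a ^ 2 / liftedNorm z ^ 2 ≤ 1 := div_le_one_of_le₀ (by gcongr) (by positivity)
    have hb' : b ^ 2 / liftedNorm w ^ 2 ≤ 1 := div_le_one_of_le₀ (by gcongr) (by positivity)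
    linarith
  have hquadratic : (a ^ 2 / liftedNorm z ^ 2 + b ^ 2 / liftedNorm w ^ 2) / 2 *
      (⟪z, w⟫ ^ 2 / liftedGram z w) ≤ |⟪z, w⟫| := by
    refine (mul_le_of_le_one_left (by positivity) hmean).trans ?_
    rw [div_le_iff₀ hD, ← sq_abs, sq]
    gcongr
  have hcross : -|⟪z, w⟫| ≤ a * b / liftedGram z w * ⟪z, w⟫ := by
    have hle : a * b / liftedGram z w ≤ 1 :=
      div_le_one_of_le₀ ((mul_le_mul hz hw hb hV.le).trans hVW) hD.le
    have habs : |a * b / liftedGram z w * ⟪z, w⟫| ≤ |⟪z, w⟫| := by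
      rw [abs_mul, abs_of_nonneg (by positivity : 0 ≤ a * b / liftedGram z w)]
      exact mul_le_of_le_one_left (abs_nonneg _) hle
    exact neg_le_of_abs_le habs
  linarith

lemma integral_cexp_gaussianReal_right (z w : E) (a b x : ℝ) :
    ∫ y : ℝ, Complex.exp ((x * a + y * b : ℝ) * Complex.I - (‖x • z + y • w‖ ^ 2 / 2 : ℝ))
      ∂gaussianReal 0 1 =
    ((liftedNorm w)⁻¹ : ℝ) * Complex.exp (-((liftedGram z w / liftedNorm w ^ 2 - 1) / 2 : ℝ) *
      (x : ℂ) ^ 2 + ((a - b * ⟪z, w⟫ / liftedNorm w ^ 2 : ℝ) * Complex.I) * x +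
        (-b ^ 2 / (2 * liftedNorm w ^ 2) : ℝ)) := by
  have hW := liftedNorm_pos w
  have hWc : (liftedNorm w : ℂ) ≠ 0 := by exact_mod_cast hW.ne'
  have hquadratic (y : ℝ) :
      (x * a + y * b : ℝ) * Complex.I - (‖x • z + y • w‖ ^ 2 / 2 : ℝ) =
        -((liftedNorm w ^ 2 - 1) / 2 : ℝ) * (y : ℂ) ^ 2 + (b * Complex.I - ⟪z, w⟫ * x) * y +
          (x * a * Complex.I - ‖z‖ ^ 2 * x ^ 2 / 2) := by
    rw [norm_add_sq_real, norm_smul, norm_smul, inner_smul_left, inner_smul_right, mul_pow, mul_pow,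
      liftedNorm_sq, conj_trivial]
    simp only [Real.norm_eq_abs, sq_abs]
    push_cast
    ring
  simp_rw [hquadratic, integral_cexp_quadratic_gaussianReal (pow_pos hW 2), Real.sqrt_sq hW.le]
  have hz : (‖z‖ : ℂ) ^ 2 = liftedNorm z ^ 2 - 1 := by
    exact_mod_cast (by linarith [liftedNorm_sq z] : ‖z‖ ^ 2 = liftedNorm z ^ 2 - 1)
  rw [hz, liftedGram]
  push_cast
  congr 2
  field_simp
  ring_nf
  rw [Complex.I_sq]
  ring

variable [FiniteDimensional ℝ E] [MeasurableSpace E] [BorelSpace E]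

/-- The expectation of `exp (-(a - ⟪G, z⟫)² / 2 - (b - ⟪G, w⟫)² / 2)` over a standard Gaussian `G`:
the correlation of the two bumps located at `⟪·, z⟫ = a` and `⟪·, w⟫ = b`. -/
def gaussianAverage (z w : E) (a b : ℝ) : ℝ :=
  ∫ g, exp (-(a - ⟪g, z⟫) ^ 2 / 2 - (b - ⟪g, w⟫) ^ 2 / 2) ∂stdGaussian E

lemma cexp_neg_sq_sub_sq_eq_integral (u v : ℝ) :
    ((exp (-u ^ 2 / 2 - v ^ 2 / 2) : ℝ) : ℂ) =
      ∫ p : ℝ × ℝ, Complex.exp ((p.1 * u + p.2 * v : ℝ) * Complex.I)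
        ∂(gaussianReal 0 1).prod (gaussianReal 0 1) := by
  calc ((exp (-u ^ 2 / 2 - v ^ 2 / 2) : ℝ) : ℂ)
      = Complex.exp (-(u : ℂ) ^ 2 / 2) * Complex.exp (-(v : ℂ) ^ 2 / 2) := by
        rw [← Complex.exp_add]
        push_cast
        ring_nf
    _ = _ := by
        rw [cexp_neg_sq_div_two_eq_integral, cexp_neg_sq_div_two_eq_integral, ← integral_prod_mul]
        simp only [← Complex.exp_add, Complex.ofReal_add, Complex.ofReal_mul, add_mul]

lemma integral_cexp_affine_stdGaussian (z w : E) (a b x y : ℝ) :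
    ∫ g, Complex.exp ((x * (a - ⟪g, z⟫) + y * (b - ⟪g, w⟫) : ℝ) * Complex.I) ∂stdGaussian E =
      Complex.exp ((x * a + y * b : ℝ) * Complex.I - (‖x • z + y • w‖ ^ 2 / 2 : ℝ)) := by
  have hcharFun : Complex.exp (-((‖x • z + y • w‖ ^ 2 / 2 : ℝ) : ℂ)) =
      ∫ g, Complex.exp ((⟪g, -(x • z + y • w)⟫ : ℝ) * Complex.I) ∂stdGaussian E := by
    rw [← charFun_apply, charFun_stdGaussian, norm_neg]
    push_cast
    ring_nf
  rw [sub_eq_add_neg, Complex.exp_add, hcharFun, ← integral_const_mul]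
  refine integral_congr_ae (.of_forall fun g ↦ ?_)
  simp only [← Complex.exp_add, inner_neg_right, inner_add_right, inner_smul_right]
  push_cast
  ring_nf

lemma gaussianAverage_eq_integral_integral_cexp (z w : E) (a b : ℝ) :
    (gaussianAverage z w a b : ℂ) = ∫ x : ℝ, ∫ y : ℝ,
      Complex.exp ((x * a + y * b : ℝ) * Complex.I - (‖x • z + y • w‖ ^ 2 / 2 : ℝ))
      ∂gaussianReal 0 1 ∂gaussianReal 0 1 := by
  rw [gaussianAverage, ← integral_complex_ofReal]
  simp_rw [cexp_neg_sq_sub_sq_eq_integral]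
  rw [integral_integral_swap, integral_congr_ae (.of_forall fun p : ℝ × ℝ ↦
    integral_cexp_affine_stdGaussian z w a b p.1 p.2), integral_prod]
  · refine .of_bound (C := 1) (Continuous.aestronglyMeasurable (by fun_prop))
      (.of_forall fun p ↦ ?_)
    rw [Complex.norm_exp, Real.exp_le_one_iff, Complex.sub_re, Complex.re_ofReal_mul, Complex.I_re,
      Complex.ofReal_re, mul_zero, zero_sub, neg_nonpos]
    positivity
  · refine .of_bound (C := 1) (Continuous.aestronglyMeasurable ?_) (.of_forall fun q ↦ ?_)
    · unfold Function.uncurry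
      fun_prop
    · exact (Complex.norm_exp_ofReal_mul_I _).le

lemma gaussianAverage_eq (z w : E) (a b : ℝ) :
    gaussianAverage z w a b = (√(liftedGram z w))⁻¹ *
      exp (-(a ^ 2 * liftedNorm w ^ 2 + b ^ 2 * liftedNorm z ^ 2 - 2 * a * b * ⟪z, w⟫) /
        (2 * liftedGram z w)) := by
  have hW := liftedNorm_pos w
  have hD := liftedGram_pos z w
  have hquotient : 0 < liftedGram z w / liftedNorm w ^ 2 := by positivity
  have hexponent : -b ^ 2 / (2 * liftedNorm w ^ 2) - (a - b * ⟪z, w⟫ / liftedNorm w ^ 2) ^ 2 /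
      (2 * (liftedGram z w / liftedNorm w ^ 2)) =
      -(a ^ 2 * liftedNorm w ^ 2 + b ^ 2 * liftedNorm z ^ 2 - 2 * a * b * ⟪z, w⟫) /
        (2 * liftedGram z w) := by
    field_simp
    rw [liftedGram]
    ring
  have hfactor : (liftedNorm w)⁻¹ * (√(liftedGram z w / liftedNorm w ^ 2))⁻¹ =
      (√(liftedGram z w))⁻¹ := by
    rw [Real.sqrt_div hD.le, Real.sqrt_sq hW.le]
    field_simp
  apply Complex.ofReal_injective
  simp_rw [gaussianAverage_eq_integral_integral_cexp, integral_cexp_gaussianReal_right]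
  rw [integral_const_mul, integral_cexp_quadratic_gaussianReal hquotient, ← mul_assoc, mul_pow,
    Complex.I_sq, ← hexponent, ← hfactor]
  push_cast
  ring_nf

lemma lintegral_pi_stdGaussian_mul (k : ℕ) (z w : E) (a b : ℝ) :
    ∫⁻ G : Fin k → E, ENNReal.ofReal (exp (-∑ i, (a - ⟪G i, z⟫) ^ 2 / 2)) *
      ENNReal.ofReal (exp (-∑ i, (b - ⟪G i, w⟫) ^ 2 / 2)) ∂Measure.pi (fun _ ↦ stdGaussian E) =
    ENNReal.ofReal (gaussianAverage z w a b ^ k) := by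
  have hprod := integral_fintype_prod_eq_pow (ι := Fin k) (𝕜 := ℝ) (μ := stdGaussian E)
    fun g ↦ exp (-(a - ⟪g, z⟫) ^ 2 / 2 - (b - ⟪g, w⟫) ^ 2 / 2)
  rw [Fintype.card_fin] at hprod
  rw [gaussianAverage, ← hprod, ofReal_integral_eq_lintegral_ofReal]
  · refine lintegral_congr fun G ↦ ?_
    rw [← ENNReal.ofReal_mul (exp_pos _).le, ← exp_add, ← exp_sum, ← Finset.sum_neg_distrib,
      ← Finset.sum_neg_distrib, ← Finset.sum_add_distrib]
    simp only [neg_div, sub_eq_add_neg]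
  · refine .of_bound (C := 1) (Measurable.aestronglyMeasurable (by fun_prop))
      (.of_forall fun G ↦ ?_)
    rw [← exp_sum, Real.norm_of_nonneg (exp_pos _).le, exp_le_one_iff]
    refine Finset.sum_nonpos fun i _ ↦ ?_
    linarith [sq_nonneg (a - ⟪G i, z⟫), sq_nonneg (b - ⟪G i, w⟫)]
  · exact .of_forall fun G ↦ Finset.prod_nonneg fun i _ ↦ (exp_pos _).le

lemma lintegral_lintegral_lintegral_mul {α β γ : Type*} [MeasurableSpace α] [MeasurableSpace β]
    [MeasurableSpace γ] {μ : Measure α} {ν : Measure β} {ρ : Measure γ} [SFinite μ] [SFinite ν]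
    [SFinite ρ] {f : α → β → ℝ≥0∞} {g : α → γ → ℝ≥0∞} (hf : Measurable (Function.uncurry f))
    (hg : Measurable (Function.uncurry g)) :
    ∫⁻ z, ∫⁻ w, ∫⁻ x, f x z * g x w ∂μ ∂ρ ∂ν = ∫⁻ x, (∫⁻ z, f x z ∂ν) * ∫⁻ w, g x w ∂ρ ∂μ := by
  have hinner (z : β) : ∫⁻ w, ∫⁻ x, f x z * g x w ∂μ ∂ρ = ∫⁻ x, f x z * ∫⁻ w, g x w ∂ρ ∂μ := by
    rw [lintegral_lintegral_swap]
    · exact lintegral_congr fun x ↦ lintegral_const_mul _ hg.of_uncurry_left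
    · exact ((hf.comp (measurable_snd.prodMk measurable_const)).mul
        (hg.comp (measurable_snd.prodMk measurable_fst))).aemeasurable
  simp_rw [hinner]
  rw [lintegral_lintegral_swap]
  · exact lintegral_congr fun x ↦ lintegral_mul_const _ hf.of_uncurry_left
  · exact ((hf.comp (measurable_snd.prodMk measurable_fst)).mul
      (hg.lintegral_prod_right'.comp measurable_snd)).aemeasurable

lemma IsPrekopaLeindler.lintegral_gaussianAverage_pow_le {ν : Measure E} [SFinite ν]
    (hν : IsPrekopaLeindler ν) (k : ℕ) (a b : ℝ) :
    ∫⁻ z, ∫⁻ w, ENNReal.ofReal (gaussianAverage z w a b ^ k) ∂ν ∂ν ≤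
      ∫⁻ z, ∫⁻ w, ENNReal.ofReal (gaussianAverage z w ((a + b) / 2) ((a + b) / 2) ^ k) ∂ν ∂ν := by
  have hmeas (a : ℝ) : Measurable (Function.uncurry fun (G : Fin k → E) (z : E) ↦
      ENNReal.ofReal (exp (-∑ i, (a - ⟪G i, z⟫) ^ 2 / 2))) := by
    unfold Function.uncurry
    fun_prop
  simp_rw [← lintegral_pi_stdGaussian_mul, lintegral_lintegral_lintegral_mul (hmeas _) (hmeas _)]
  refine lintegral_mono fun G ↦ ?_
  rw [← sq]
  refine hν (hmeas a).of_uncurry_left (hmeas b).of_uncurry_left (hmeas _).of_uncurry_left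
    fun x y ↦ ?_
  rw [← ENNReal.ofReal_mul (exp_pos _).le, ← ENNReal.ofReal_pow (exp_pos _).le, ← exp_add,
    ← exp_nat_mul]
  refine ENNReal.ofReal_le_ofReal (exp_le_exp.2 ?_)
  have hconvex : ∑ i, 2 * (((a + b) / 2 - ⟪G i, midpoint ℝ x y⟫) ^ 2 / 2) ≤
      ∑ i, ((a - ⟪G i, x⟫) ^ 2 / 2 + (b - ⟪G i, y⟫) ^ 2 / 2) := by
    refine Finset.sum_le_sum fun i _ ↦ ?_
    rw [midpoint_eq_smul_add, inner_smul_right, inner_add_right, invOf_eq_inv]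
    nlinarith [sq_nonneg ((a - ⟪G i, x⟫) - (b - ⟪G i, y⟫))]
  rw [← Finset.mul_sum, Finset.sum_add_distrib] at hconvex
  push_cast
  linarith

lemma gaussianAverage_self_le (z w : E) {m : ℝ} (hm : 0 < m) :
    gaussianAverage z w m m ≤ exp (|⟪z, w⟫| - 1) / m ^ 2 := by
  have hinner := one_add_abs_inner_le_liftedNorm_mul z w
  have hD := liftedGram_pos z w
  have hD_eq := liftedGram_eq_mul z w
  have hsqrt := inv_sqrt_liftedGram_le z w
  rw [gaussianAverage_eq]
  set c := |⟪z, w⟫|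
  set d := liftedNorm z * liftedNorm w - c
  set g := liftedNorm z * liftedNorm w + c
  have hg₀ : 0 < g := by linarith [abs_nonneg ⟪z, w⟫]
  have hexponent : -(m ^ 2 * liftedNorm w ^ 2 + m ^ 2 * liftedNorm z ^ 2 - 2 * m * m * ⟪z, w⟫) /
      (2 * liftedGram z w) ≤ -(m ^ 2 / g) := by
    rw [← neg_div, div_le_div_iff₀ (by positivity) hg₀, hD_eq]
    have hsquares : 2 * d ≤ liftedNorm w ^ 2 + liftedNorm z ^ 2 - 2 * ⟪z, w⟫ := by
      linarith [two_mul_le_add_sq (liftedNorm z) (liftedNorm w), le_abs_self ⟪z, w⟫]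
    have hscaled := mul_le_mul_of_nonneg_right hsquares (by positivity : 0 ≤ m ^ 2 * g)
    linarith
  calc _ ≤ exp c / g * exp (-(m ^ 2 / g)) := by gcongr
    _ = exp c * (m ^ 2 / g * exp (-(m ^ 2 / g))) / m ^ 2 := by field_simp
    _ ≤ exp c * exp (-1) / m ^ 2 := by gcongr; exact mul_exp_neg_le_exp_neg_one _
    _ = exp (c - 1) / m ^ 2 := by rw [← exp_add, sub_eq_add_neg]

lemma exp_div_le_inv_mul_exp {a v τ : ℝ} (ha : 1 / 2 ≤ a) (hav : a ≤ v) (hva : v ≤ a + τ) :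
    exp (-(1 / 2) - 6 * τ ^ 2) / a ≤ v⁻¹ * exp (-(a ^ 2 / (2 * v ^ 2))) := by
  have ha₀ : 0 < a := by linarith
  have hv₀ : 0 < v := by linarith
  have htaylor : 1 - (a / v)⁻¹ - a ^ 2 / (2 * v ^ 2) =
      -(1 / 2) - (v - a) ^ 2 * ((a + 2 * v) / (2 * a * v ^ 2)) := by
    field_simp
    ring
  have hcoefficient : (a + 2 * v) / (2 * a * v ^ 2) ≤ 6 := by
    rw [div_le_iff₀ (by positivity)]
    nlinarith [mul_le_mul ha (ha.trans hav) (by norm_num) ha₀.le]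
  have hremainder : (v - a) ^ 2 * ((a + 2 * v) / (2 * a * v ^ 2)) ≤ τ ^ 2 * 6 := by
    have := sub_nonneg.2 hav
    gcongr
    linarith
  have hlog := one_sub_inv_le_log_of_pos (div_pos ha₀ hv₀)
  have hexponent : -(1 / 2) - 6 * τ ^ 2 ≤ log (a / v) - a ^ 2 / (2 * v ^ 2) := by linarith
  calc exp (-(1 / 2) - 6 * τ ^ 2) / a ≤ exp (log (a / v) - a ^ 2 / (2 * v ^ 2)) / a := by gcongr
    _ = _ := by
      rw [sub_eq_add_neg, exp_add, exp_log (by positivity)]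
      field_simp

lemma exp_div_mul_le_gaussianAverage {z w : E} {a b τ : ℝ} (ha : 1 / 2 ≤ a) (hb : 1 / 2 ≤ b)
    (haz : a ≤ liftedNorm z) (hza : liftedNorm z ≤ a + τ) (hbw : b ≤ liftedNorm w)
    (hwb : liftedNorm w ≤ b + τ) :
    exp (-1 - 12 * τ ^ 2 - 2 * |⟪z, w⟫|) / (a * b) ≤ gaussianAverage z w a b := by
  have hV := liftedNorm_pos z
  have hW := liftedNorm_pos w
  have hD := liftedGram_pos z w
  have hsqrt : (liftedNorm z)⁻¹ * (liftedNorm w)⁻¹ ≤ (√(liftedGram z w))⁻¹ := by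
    rw [← mul_inv]
    gcongr
    refine Real.sqrt_le_iff.2 ⟨by positivity, ?_⟩
    rw [liftedGram, mul_pow]
    exact sub_le_self _ (sq_nonneg _)
  set V := liftedNorm z
  set W := liftedNorm w
  set c := |⟪z, w⟫|
  calc exp (-1 - 12 * τ ^ 2 - 2 * c) / (a * b)
      = (exp (-(1 / 2) - 6 * τ ^ 2) / a) * (exp (-(1 / 2) - 6 * τ ^ 2) / b) * exp (-(2 * c)) := by
        rw [div_mul_div_comm, ← exp_add, div_mul_eq_mul_div, ← exp_add]
        ring_nf
    _ ≤ (V⁻¹ * exp (-(a ^ 2 / (2 * V ^ 2)))) * (W⁻¹ * exp (-(b ^ 2 / (2 * W ^ 2)))) *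
          exp (-(2 * c)) := by
        have : 0 < a := by linarith
        have : 0 < b := by linarith
        gcongr
        · exact exp_div_le_inv_mul_exp ha haz hza
        · exact exp_div_le_inv_mul_exp hb hbw hwb
    _ = V⁻¹ * W⁻¹ * exp (-(a ^ 2 / (2 * V ^ 2)) - b ^ 2 / (2 * W ^ 2) - 2 * c) := by
        rw [sub_eq_add_neg, sub_eq_add_neg, exp_add, exp_add]
        ring
    _ ≤ gaussianAverage z w a b := by
        rw [gaussianAverage_eq]
        gcongr
        exact le_neg_div_liftedGram (by linarith) (by linarith) haz hbw

end GaussianAverage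

/-! ### Two shells cannot both be heavy -/

lemma setLIntegral_Ioi_ofReal_rpow {a c : ℝ} (ha : a < -1) (hc : 0 < c) :
    ∫⁻ t in Set.Ioi c, ENNReal.ofReal (t ^ a) = ENNReal.ofReal (-c ^ (a + 1) / (a + 1)) := by
  rw [← integral_Ioi_rpow_of_lt ha hc, ofReal_integral_eq_lintegral_ofReal
    (integrableOn_Ioi_rpow_of_lt ha hc)]
  filter_upwards [ae_restrict_mem measurableSet_Ioi] with t ht
  exact rpow_nonneg (hc.trans ht).le _

lemma lintegral_exp_mul_le_of_exp_tail {Ω : Type*} [MeasurableSpace Ω] {μ : Measure Ω}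
    (hμ : μ Set.univ ≤ 1) {f : Ω → ℝ} (hf : AEMeasurable f μ) {k δ : ℝ} (hk : 0 < k) (hδ : 0 ≤ δ)
    (htail : ∀ η, δ ≤ η → μ {ω | η ≤ f ω} ≤ ENNReal.ofReal (exp (-(4 * k * η)))) :
    ∫⁻ ω, ENNReal.ofReal (exp (k * f ω)) ∂μ ≤ ENNReal.ofReal (2 * exp (k * δ)) := by
  have hlow : ∫⁻ t in Set.Ioc 0 (exp (k * δ)), μ {ω | t ≤ exp (k * f ω)} ≤
      ENNReal.ofReal (exp (k * δ)) := by
    calc _ ≤ ∫⁻ _ in Set.Ioc 0 (exp (k * δ)), 1 :=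
          lintegral_mono fun t ↦ (measure_mono (Set.subset_univ _)).trans hμ
      _ = ENNReal.ofReal (exp (k * δ)) := by simp
  have hpoint : ∀ t ∈ Set.Ioi (exp (k * δ)),
      μ {ω | t ≤ exp (k * f ω)} ≤ ENNReal.ofReal (t ^ (-4 : ℝ)) := by
    intro t (ht : exp (k * δ) < t)
    have ht₀ : 0 < t := (exp_pos _).trans ht
    have hset : {ω | t ≤ exp (k * f ω)} = {ω | log t / k ≤ f ω} := by
      ext ω
      simp only [Set.mem_ofPred_eq]
      rw [← log_le_iff_le_exp ht₀, div_le_iff₀' hk]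
    have hlog : δ ≤ log t / k := by
      rw [le_div_iff₀' hk]
      exact (le_log_iff_exp_le ht₀).2 ht.le
    rw [hset, rpow_def_of_pos ht₀]
    refine (htail _ hlog).trans_eq ?_
    congr 2
    field_simp
  have hhigh : ∫⁻ t in Set.Ioi (exp (k * δ)), μ {ω | t ≤ exp (k * f ω)} ≤
      ENNReal.ofReal (exp (k * δ)) := by
    refine (setLIntegral_mono' measurableSet_Ioi hpoint).trans ?_
    rw [setLIntegral_Ioi_ofReal_rpow (by norm_num) (exp_pos _), ← exp_mul]
    refine ENNReal.ofReal_le_ofReal ?_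
    rw [show (-4 : ℝ) + 1 = -3 by norm_num]
    have hexp : exp (k * δ * -3) ≤ exp (k * δ) := exp_le_exp.2 (by nlinarith)
    linarith [exp_pos (k * δ)]
  rw [lintegral_eq_lintegral_meas_le μ (.of_forall fun ω ↦ (exp_pos _).le) (by fun_prop),
    ← Set.Ioc_union_Ioi_eq_Ioi (exp_pos (k * δ)).le]
  calc _ ≤ _ := lintegral_union_le _ _ _
    _ ≤ _ := add_le_add hlow hhigh
    _ = _ := by rw [← ENNReal.ofReal_add (exp_pos _).le (exp_pos _).le, two_mul]

section Shells

variable {E : Type*} [NormedAddCommGroup E]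

/-- The shell on which the lifted norm lies in `[a, a + τ)`. -/
def shell (E : Type*) [NormedAddCommGroup E] (a τ : ℝ) : Set E :=
  liftedNorm ⁻¹' Set.Ico a (a + τ)

lemma measurableSet_shell [MeasurableSpace E] [OpensMeasurableSpace E] (a τ : ℝ) :
    MeasurableSet (shell E a τ) :=
  measurable_liftedNorm measurableSet_Ico

/-- The restriction of a measure to the ball of radius `16`, on which all the shells carrying
mass have parameter in the bounded interval `[1/2, 17]`. -/
def ballTruncation [MeasurableSpace E] (ρ : Measure E) : Measure E :=
  ρ.restrict (Metric.closedBall 0 16)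

instance [MeasurableSpace E] (ρ : Measure E) [IsFiniteMeasure ρ] :
    IsFiniteMeasure (ballTruncation ρ) := by
  unfold ballTruncation
  infer_instance

lemma ballTruncation_le [MeasurableSpace E] (ρ : Measure E) : ballTruncation ρ ≤ ρ :=
  Measure.restrict_le_self

lemma liftedNorm_le_of_mem_closedBall {z : E} (hz : z ∈ Metric.closedBall 0 16) :
    liftedNorm z ≤ 17 := by
  rw [mem_closedBall_zero_iff] at hz
  refine Real.sqrt_le_iff.2 ⟨by norm_num, ?_⟩
  nlinarith [norm_nonneg z]

lemma mem_Icc_of_measureReal_shell_ne_zero [MeasurableSpace E] [OpensMeasurableSpace E]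
    {ρ : Measure E} {a τ : ℝ} (hτ : τ ≤ 1 / 2) (h : (ballTruncation ρ).real (shell E a τ) ≠ 0) :
    a ∈ Set.Icc (1 / 2) 17 := by
  rw [ballTruncation, measureReal_restrict_apply (measurableSet_shell a τ)] at h
  obtain ⟨z, ⟨haz, hza⟩, hz⟩ : (shell E a τ ∩ Metric.closedBall 0 16).Nonempty := by
    rw [Set.nonempty_iff_ne_empty]
    rintro hempty
    simp [hempty] at h
  exact ⟨by linarith [one_le_liftedNorm z], haz.trans (liftedNorm_le_of_mem_closedBall hz)⟩

lemma exists_heaviest_shell [MeasurableSpace E] [OpensMeasurableSpace E] (ρ : Measure E) {τ : ℝ}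
    (hτ : 0 < τ) (hτ_half : τ ≤ 1 / 2) : ∃ i : ℤ, 0 ≤ i ∧ ∀ j : ℤ,
      (ballTruncation ρ).real (shell E (j * τ) τ) ≤
        (ballTruncation ρ).real (shell E (i * τ) τ) := by
  obtain ⟨i, hi, hmax⟩ := Finset.exists_max_image (Finset.Icc 0 ⌊17 / τ⌋)
    (fun j : ℤ ↦ (ballTruncation ρ).real (shell E (j * τ) τ))
    (Finset.nonempty_Icc.2 (Int.floor_nonneg.2 (by positivity)))
  refine ⟨i, (Finset.mem_Icc.1 hi).1, fun j ↦ ?_⟩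
  by_cases h : (ballTruncation ρ).real (shell E (j * τ) τ) = 0
  · rw [h]
    exact measureReal_nonneg
  · obtain ⟨hlo, hhi⟩ := mem_Icc_of_measureReal_shell_ne_zero hτ_half h
    refine hmax j (Finset.mem_Icc.2 ⟨?_, Int.le_floor.2 ((le_div_iff₀ hτ).2 hhi)⟩)
    exact_mod_cast nonneg_of_mul_nonneg_left ((by norm_num : (0 : ℝ) ≤ 1 / 2).trans hlo) hτ

variable [InnerProductSpace ℝ E] [MeasurableSpace E] [BorelSpace E]

/-- Inner products of two independent points with distribution `ν` have exponential tails of rate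
`4 k` beyond the level `τ²`. This makes two independent points almost orthogonal, in the strong
sense that `exp (k |⟪z, w⟫|)` is essentially bounded by `exp (k τ²)` on average. -/
def HasInnerTail (ν : Measure E) (k : ℕ) (τ : ℝ) : Prop :=
  ∀ η, τ ^ 2 ≤ η →
    (ν.prod ν) {p | η ≤ |⟪p.1, p.2⟫|} ≤ ENNReal.ofReal (exp (-(4 * k * η)))

variable [FiniteDimensional ℝ E]

lemma measurable_gaussianAverage (a b : ℝ) :
    Measurable fun p : E × E ↦ gaussianAverage p.1 p.2 a b := by
  have hV : Measurable (liftedNorm : E → ℝ) := measurable_liftedNorm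
  simp_rw [gaussianAverage_eq, liftedGram]
  fun_prop

lemma HasInnerTail.lintegral_gaussianAverage_self_pow_le {ν : Measure E} [SFinite ν]
    (hν_le : ν Set.univ ≤ 1) {k : ℕ} {τ : ℝ} (hν : HasInnerTail ν k τ) (hk : 0 < k) {m : ℝ}
    (hm : 0 < m) :
    ∫⁻ z, ∫⁻ w, ENNReal.ofReal (gaussianAverage z w m m ^ k) ∂ν ∂ν ≤
      ENNReal.ofReal ((exp (-1) / m ^ 2) ^ k * (2 * exp (k * τ ^ 2))) := by
  have hpoint (z w : E) : gaussianAverage z w m m ^ k ≤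
      (exp (-1) / m ^ 2) ^ k * exp (k * |⟪z, w⟫|) := by
    calc gaussianAverage z w m m ^ k ≤ (exp (|⟪z, w⟫| - 1) / m ^ 2) ^ k :=
          pow_le_pow_left₀ (integral_nonneg fun _ ↦ (exp_pos _).le)
            (gaussianAverage_self_le z w hm) k
      _ = _ := by
        rw [exp_nat_mul, ← mul_pow, sub_eq_add_neg, exp_add]
        ring
  have hprod : (ν.prod ν) Set.univ ≤ 1 := by
    rw [← Set.univ_prod_univ, Measure.prod_prod]
    exact mul_le_one' hν_le hν_le
  calc ∫⁻ z, ∫⁻ w, ENNReal.ofReal (gaussianAverage z w m m ^ k) ∂ν ∂ν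
      ≤ ∫⁻ z, ∫⁻ w, ENNReal.ofReal ((exp (-1) / m ^ 2) ^ k) *
          ENNReal.ofReal (exp (k * |⟪z, w⟫|)) ∂ν ∂ν := by
        refine lintegral_mono fun z ↦ lintegral_mono fun w ↦ ?_
        rw [← ENNReal.ofReal_mul (by positivity)]
        exact ENNReal.ofReal_le_ofReal (hpoint z w)
    _ = ENNReal.ofReal ((exp (-1) / m ^ 2) ^ k) *
          ∫⁻ p, ENNReal.ofReal (exp (k * |⟪p.1, p.2⟫|)) ∂ν.prod ν := by
        rw [← lintegral_const_mul _ (by fun_prop), lintegral_prod _ (by fun_prop)]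
    _ ≤ _ := by
        rw [ENNReal.ofReal_mul (by positivity)]
        gcongr
        exact lintegral_exp_mul_le_of_exp_tail hprod (by fun_prop) (Nat.cast_pos.2 hk)
          (sq_nonneg τ) hν

lemma exp_neg_one_div_sq_div_le {a b : ℝ} (ha : 0 < a) (hb : 0 < b) (s : ℝ) :
    exp (-1) / ((a + b) / 2) ^ 2 / (exp (-1 - s) / (a * b)) ≤
      exp (s - ((a - b) / (a + b)) ^ 2) := by
  have hratio : exp (-1) / ((a + b) / 2) ^ 2 / (exp (-1 - s) / (a * b)) =
      exp s * (1 - ((a - b) / (a + b)) ^ 2) := by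
    rw [sub_eq_add_neg, exp_add, exp_neg s]
    field_simp
    ring
  rw [hratio, sub_eq_add_neg s, exp_add]
  gcongr
  exact one_sub_le_exp_neg _

lemma HasInnerTail.measureReal_shell_prod_inter_le {ν : Measure E} [IsFiniteMeasure ν]
    (hPL : IsPrekopaLeindler ν) (hν_le : ν Set.univ ≤ 1) {k : ℕ} {τ : ℝ} (hν : HasInnerTail ν k τ)
    (hk : 0 < k) {a b η : ℝ} (ha : 1 / 2 ≤ a) (hb : 1 / 2 ≤ b) :
    (ν.prod ν).real ((shell E a τ ×ˢ shell E b τ) ∩ {p | |⟪p.1, p.2⟫| ≤ η}) ≤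
      2 * exp (k * (13 * τ ^ 2 + 2 * η - ((a - b) / (a + b)) ^ 2)) := by
  have ha₀ : 0 < a := by linarith
  have hb₀ : 0 < b := by linarith
  set T : Set (E × E) := (shell E a τ ×ˢ shell E b τ) ∩ {p | |⟪p.1, p.2⟫| ≤ η}
  have hT : MeasurableSet T := ((measurableSet_shell a τ).prod (measurableSet_shell b τ)).inter
    (measurableSet_le (by fun_prop) measurable_const)
  set l := exp (-1 - (12 * τ ^ 2 + 2 * η)) / (a * b)
  set u := exp (-1) / ((a + b) / 2) ^ 2
  have hl : 0 < l := by positivity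
  have hlower : ∀ p ∈ T, l ≤ gaussianAverage p.1 p.2 a b := by
    rintro p ⟨⟨⟨haz, hza⟩, hbw, hwb⟩, hη⟩
    refine le_trans ?_ (exp_div_mul_le_gaussianAverage ha hb haz hza.le hbw hwb.le)
    refine div_le_div_of_nonneg_right (exp_le_exp.2 ?_) (by positivity)
    linarith [show |⟪p.1, p.2⟫| ≤ η from hη]
  have hscaled : ENNReal.ofReal (l ^ k) * (ν.prod ν) T ≤
      ENNReal.ofReal (u ^ k * (2 * exp (k * τ ^ 2))) := by
    calc ENNReal.ofReal (l ^ k) * (ν.prod ν) T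
        = ∫⁻ _ in T, ENNReal.ofReal (l ^ k) ∂ν.prod ν := (setLIntegral_const _ _).symm
      _ ≤ ∫⁻ p in T, ENNReal.ofReal (gaussianAverage p.1 p.2 a b ^ k) ∂ν.prod ν :=
          setLIntegral_mono' hT fun p hp ↦
            ENNReal.ofReal_le_ofReal (pow_le_pow_left₀ hl.le (hlower p hp) k)
      _ ≤ ∫⁻ p, ENNReal.ofReal (gaussianAverage p.1 p.2 a b ^ k) ∂ν.prod ν :=
          setLIntegral_le_lintegral _ _
      _ = ∫⁻ z, ∫⁻ w, ENNReal.ofReal (gaussianAverage z w a b ^ k) ∂ν ∂ν :=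
          lintegral_prod _
            ((measurable_gaussianAverage a b).pow_const k).ennreal_ofReal.aemeasurable
      _ ≤ _ := hPL.lintegral_gaussianAverage_pow_le k a b
      _ ≤ _ := hν.lintegral_gaussianAverage_self_pow_le hν_le hk (by positivity)
  have hreal : l ^ k * (ν.prod ν).real T ≤ u ^ k * (2 * exp (k * τ ^ 2)) := by
    rw [← ofReal_measureReal, ← ENNReal.ofReal_mul (by positivity),
      ENNReal.ofReal_le_ofReal_iff (by positivity)] at hscaled
    exact hscaled
  calc (ν.prod ν).real T ≤ (u / l) ^ k * (2 * exp (k * τ ^ 2)) := by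
        rw [div_pow, div_mul_eq_mul_div, le_div_iff₀' (by positivity)]
        exact hreal
    _ ≤ exp (12 * τ ^ 2 + 2 * η - ((a - b) / (a + b)) ^ 2) ^ k * (2 * exp (k * τ ^ 2)) := by
        gcongr
        exact exp_neg_one_div_sq_div_le ha₀ hb₀ _
    _ = _ := by
        rw [← exp_nat_mul, mul_left_comm, ← exp_add]
        ring_nf

lemma HasInnerTail.measureReal_shell_mul_le {ν : Measure E} [IsFiniteMeasure ν]
    (hPL : IsPrekopaLeindler ν) (hν_le : ν Set.univ ≤ 1) {k : ℕ} {τ : ℝ} (hν : HasInnerTail ν k τ)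
    (hk : 0 < k) {a b η : ℝ} (ha : 1 / 2 ≤ a) (hb : 1 / 2 ≤ b) (hη : τ ^ 2 ≤ η) :
    ν.real (shell E a τ) * ν.real (shell E b τ) ≤ exp (-(4 * k * η)) +
      2 * exp (k * (13 * τ ^ 2 + 2 * η - ((a - b) / (a + b)) ^ 2)) := by
  have htail : (ν.prod ν).real {p | η ≤ |⟪p.1, p.2⟫|} ≤ exp (-(4 * k * η)) :=
    ENNReal.toReal_le_of_le_ofReal (exp_pos _).le (hν η hη)
  have hcover : shell E a τ ×ˢ shell E b τ ⊆ {p | η ≤ |⟪p.1, p.2⟫|} ∪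
      ((shell E a τ ×ˢ shell E b τ) ∩ {p | |⟪p.1, p.2⟫| ≤ η}) := fun p hp ↦
    (le_total η |⟪p.1, p.2⟫|).imp id fun hle ↦ ⟨hp, hle⟩
  rw [← measureReal_prod_prod]
  refine (measureReal_mono hcover).trans ((measureReal_union_le _ _).trans ?_)
  exact add_le_add htail (hν.measureReal_shell_prod_inter_le hPL hν_le hk ha hb)

lemma HasInnerTail.measureReal_lighter_shell_le {ρ : Measure E} [IsProbabilityMeasure ρ]
    (hPL : IsPrekopaLeindler ρ) {k : ℕ} {τ : ℝ} (hρ : HasInnerTail (ballTruncation ρ) k τ)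
    (hk : 0 < k) (hτ : 0 < τ) (hτ_half : τ ≤ 1 / 2) {a b : ℝ}
    (hba : (ballTruncation ρ).real (shell E b τ) ≤ (ballTruncation ρ).real (shell E a τ))
    (hdist : 7200 * τ ≤ |a - b|) :
    (ballTruncation ρ).real (shell E b τ) ≤ 2 * exp (-(2 * k * τ * |a - b|)) := by
  set ν := ballTruncation ρ
  by_cases hb_zero : ν.real (shell E b τ) = 0
  · rw [hb_zero]
    positivity
  have ha_ne : ν.real (shell E a τ) ≠ 0 := fun ha_zero ↦
    hb_zero (le_antisymm (hba.trans_eq ha_zero) measureReal_nonneg)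
  obtain ⟨hb, hb_le⟩ := mem_Icc_of_measureReal_shell_ne_zero hτ_half hb_zero
  obtain ⟨ha, ha_le⟩ := mem_Icc_of_measureReal_shell_ne_zero hτ_half ha_ne
  have hν_PL : IsPrekopaLeindler ν := hPL.restrict (convex_closedBall _ _) measurableSet_closedBall
  have hν_le : ν Set.univ ≤ 1 := (ballTruncation_le ρ _).trans prob_le_one
  have hpair := hρ.measureReal_shell_mul_le hν_PL hν_le hk ha hb (η := τ * |a - b|)
    (by nlinarith)
  set δ := |a - b|
  have hratio : δ ^ 2 / 1156 ≤ ((a - b) / (a + b)) ^ 2 := by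
    rw [div_pow, ← sq_abs (a - b)]
    have : 0 < a + b := by linarith
    gcongr
    nlinarith
  have hexponent : k * (13 * τ ^ 2 + 2 * (τ * δ) - ((a - b) / (a + b)) ^ 2) ≤
      -(4 * k * (τ * δ)) := by
    have hgap : 13 * τ ^ 2 + 2 * (τ * δ) - ((a - b) / (a + b)) ^ 2 ≤ -(4 * (τ * δ)) := by nlinarith
    calc _ ≤ k * (-(4 * (τ * δ))) := by gcongr
      _ = _ := by ring
  have hsq_exp : exp (-(4 * k * (τ * δ))) = exp (-(2 * k * τ * δ)) ^ 2 := by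
    rw [← exp_nat_mul]
    push_cast
    ring_nf
  have hsq : ν.real (shell E b τ) ^ 2 ≤ (2 * exp (-(2 * k * τ * δ))) ^ 2 := by
    have hle := exp_le_exp.2 hexponent
    rw [hsq_exp] at hpair hle
    nlinarith [mul_le_mul_of_nonneg_right hba (measureReal_nonneg (μ := ν) (s := shell E b τ)),
      sq_nonneg (exp (-(2 * k * τ * δ)))]
  exact le_of_sq_le_sq hsq (by positivity)

end Shells

/-! ### Concentration around the heaviest shell -/

lemma measureReal_iUnion_add_le_of_exp_le {Ω : Type*} [MeasurableSpace Ω] {μ : Measure Ω}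
    [IsFiniteMeasure μ] {S : ℕ → Set Ω} {C x : ℝ} (hC : 0 ≤ C) (hx : 1 ≤ x) (d : ℕ)
    (hS : ∀ e, d ≤ e → μ.real (S e) ≤ C * exp (-(x * e))) :
    μ.real (⋃ j, S (d + j)) ≤ 2 * (C * exp (-(x * d))) := by
  have hhalf : exp (-x) ≤ 1 / 2 := by
    rw [exp_neg, one_div]
    exact inv_anti₀ two_pos (by linarith [add_one_le_exp x])
  have hterm (j : ℕ) : μ.real (S (d + j)) ≤ C * exp (-(x * d)) * (1 / 2) ^ j := by
    calc μ.real (S (d + j)) ≤ C * exp (-(x * (d + j : ℕ))) := hS _ (by omega)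
      _ = C * exp (-(x * d)) * exp (-x) ^ j := by
        rw [← exp_nat_mul, mul_assoc, ← exp_add]
        push_cast
        ring_nf
      _ ≤ _ := by gcongr
  have hsum := hasSum_geometric_two.mul_left (C * exp (-(x * d)))
  refine ENNReal.toReal_le_of_le_ofReal (by positivity) ?_
  calc μ (⋃ j, S (d + j)) ≤ ∑' j, μ (S (d + j)) := measure_iUnion_le _
    _ ≤ ∑' j, ENNReal.ofReal (C * exp (-(x * d)) * (1 / 2) ^ j) := by
      refine ENNReal.tsum_le_tsum fun j ↦ ?_
      rw [← ofReal_measureReal]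
      exact ENNReal.ofReal_le_ofReal (hterm j)
    _ = _ := by
      rw [← ENNReal.ofReal_tsum_of_nonneg (fun j ↦ by positivity) hsum.summable, hsum.tsum_eq,
        mul_comm]

section ShellConcentration

variable {E : Type*} [NormedAddCommGroup E]

lemma mem_shell_floor (z : E) {τ : ℝ} (hτ : 0 < τ) :
    z ∈ shell E (⌊liftedNorm z / τ⌋ * τ) τ := by
  have hlo := (le_div_iff₀ hτ).1 (Int.floor_le (liftedNorm z / τ))
  have hhi := (div_lt_iff₀ hτ).1 (Int.lt_floor_add_one (liftedNorm z / τ))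
  exact ⟨hlo, by linarith⟩

lemma setOf_le_abs_liftedNorm_sub_subset_iUnion_shell {τ : ℝ} (hτ : 0 < τ) (i : ℤ) (d : ℕ) :
    {z : E | d * τ ≤ |liftedNorm z - i * τ|} ⊆
      ⋃ j : ℕ, shell E ((i + (d + j : ℕ) : ℤ) * τ) τ ∪ shell E ((i - (d + j : ℕ) : ℤ) * τ) τ := by
  intro z (hz : d * τ ≤ |liftedNorm z - i * τ|)
  obtain ⟨hlo, hhi⟩ := mem_shell_floor z hτ
  have hmem := mem_shell_floor z hτ
  set N := ⌊liftedNorm z / τ⌋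
  rw [Set.mem_iUnion]
  rcases le_abs'.1 hz with h | h
  · have hle : N + d ≤ i := by
      have : ((N + d : ℤ) : ℝ) * τ ≤ i * τ := by push_cast; linarith
      exact_mod_cast le_of_mul_le_mul_right this hτ
    obtain ⟨j, hj⟩ := Int.le.dest hle
    refine ⟨j, Or.inr ?_⟩
    rwa [show i - (d + j : ℕ) = N by push_cast; omega]
  · have hlt : i + d < N + 1 := by
      have : ((i + d : ℤ) : ℝ) * τ < ((N + 1 : ℤ) : ℝ) * τ := by push_cast; linarith
      exact_mod_cast lt_of_mul_lt_mul_right this hτ.le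
    obtain ⟨j, hj⟩ := Int.le.dest (Int.lt_add_one_iff.1 hlt)
    refine ⟨j, Or.inl ?_⟩
    rwa [show i + (d + j : ℕ) = N by push_cast; omega]

/-- The truncation of `ρ` puts mass at most `8 exp (-2 k τ² d)` at distance `d τ` or more from the
shell of parameter `a`. The bound is only claimed from `7200` steps on, because shells that
are closer to each other can both be heavy. -/
def ConcentratesNear [MeasurableSpace E] (ρ : Measure E) (k : ℕ) (τ a : ℝ) : Prop :=
  ∀ d : ℕ, 7200 ≤ d →
    (ballTruncation ρ).real {z | d * τ ≤ |liftedNorm z - a|} ≤ 8 * exp (-(2 * (k * τ ^ 2) * d))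

variable [InnerProductSpace ℝ E] [FiniteDimensional ℝ E] [MeasurableSpace E] [BorelSpace E]

lemma HasInnerTail.exists_concentratesNear {ρ : Measure E} [IsProbabilityMeasure ρ]
    (hPL : IsPrekopaLeindler ρ) {k : ℕ} {τ : ℝ} (hρ : HasInnerTail (ballTruncation ρ) k τ)
    (hτ : 0 < τ) (hτ_half : τ ≤ 1 / 2) (hk : 1 / 2 ≤ k * τ ^ 2) :
    ∃ a, 0 ≤ a ∧ ConcentratesNear ρ k τ a := by
  obtain ⟨i, hi, hmax⟩ := exists_heaviest_shell ρ hτ hτ_half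
  have hk₀ : 0 < k := by
    refine Nat.pos_of_ne_zero fun h ↦ ?_
    norm_num [h] at hk
  refine ⟨i * τ, by positivity, fun d hd ↦ ?_⟩
  set S : ℕ → Set E := fun e ↦ shell E ((i + e : ℤ) * τ) τ ∪ shell E ((i - e : ℤ) * τ) τ
  have hlighter (e : ℕ) (he : 7200 ≤ e) (j : ℤ) (hj : |(i - j : ℝ)| = e) :
      (ballTruncation ρ).real (shell E (j * τ) τ) ≤ 2 * exp (-(2 * (k * τ ^ 2) * e)) := by
    have hdist : |i * τ - j * τ| = e * τ := by rw [← sub_mul, abs_mul, hj, abs_of_pos hτ]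
    have he' : (7200 : ℝ) ≤ e := mod_cast he
    refine (hρ.measureReal_lighter_shell_le hPL hk₀ hτ hτ_half (hmax j) ?_).trans_eq ?_
    · rw [hdist]
      gcongr
    · rw [hdist]
      ring_nf
  have hS : ∀ e, d ≤ e → (ballTruncation ρ).real (S e) ≤ 4 * exp (-(2 * (k * τ ^ 2) * e)) := by
    intro e he
    refine (measureReal_union_le _ _).trans ?_
    linarith [hlighter e (hd.trans he) (i + e) (by simp),
      hlighter e (hd.trans he) (i - e) (by simp)]
  calc (ballTruncation ρ).real {z | d * τ ≤ |liftedNorm z - i * τ|}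
      ≤ (ballTruncation ρ).real (⋃ j, S (d + j)) :=
        measureReal_mono (setOf_le_abs_liftedNorm_sub_subset_iUnion_shell hτ i d)
    _ ≤ 2 * (4 * exp (-(2 * (k * τ ^ 2) * d))) :=
        measureReal_iUnion_add_le_of_exp_le (by norm_num) (by linarith) d hS
    _ = 8 * exp (-(2 * (k * τ ^ 2) * d)) := by ring

end ShellConcentration

/-! ### Inner products under moment bounds -/

section PsiMoments

lemma measure_le_abs_le_of_lintegral_rpow_le {Ω : Type*} [MeasurableSpace Ω] {μ : Measure Ω}
    {f : Ω → ℝ} (hf : AEMeasurable f μ) {m p η : ℝ} (hm : 0 ≤ m) (hp : 0 ≤ p) (hη : 0 < η)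
    (hmoment : ∫⁻ ω, ENNReal.ofReal (|f ω| ^ p) ∂μ ≤ ENNReal.ofReal (m ^ p)) :
    μ {ω | η ≤ |f ω|} ≤ ENNReal.ofReal ((m / η) ^ p) := by
  have hη_pow : 0 < η ^ p := rpow_pos_of_pos hη _
  have hsubset : {ω | η ≤ |f ω|} ⊆ {ω | ENNReal.ofReal (η ^ p) ≤ ENNReal.ofReal (|f ω| ^ p)} :=
    fun ω hω ↦ ENNReal.ofReal_le_ofReal (rpow_le_rpow hη.le hω hp)
  have hmarkov : μ {ω | η ≤ |f ω|} * ENNReal.ofReal (η ^ p) ≤ ENNReal.ofReal (m ^ p) := by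
    rw [mul_comm]
    calc _ ≤ ENNReal.ofReal (η ^ p) * _ := by gcongr
      _ ≤ ∫⁻ ω, ENNReal.ofReal (|f ω| ^ p) ∂μ := mul_meas_ge_le_lintegral₀ (by fun_prop) _
      _ ≤ _ := hmoment
  rwa [← ENNReal.le_div_iff_mul_le (Or.inl (by simpa using hη_pow)) (Or.inl (by simp)),
    ← ENNReal.ofReal_div_of_pos hη_pow, ← div_rpow hm hη.le] at hmarkov

variable {E : Type*} [NormedAddCommGroup E] [InnerProductSpace ℝ E] [MeasurableSpace E]

/-- The `ψ_α` condition with constant `ε`, in terms of moments of the linear functionals. Unlike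
the `ψ_α` condition of the theorem, it is relative to the norm of the functional and not to its
standard deviation. -/
def HasPsiMoments (ρ : Measure E) (α ε : ℝ) : Prop :=
  ∀ θ p, 2 ≤ p → ∫⁻ z, ENNReal.ofReal (|⟪z, θ⟫| ^ p) ∂ρ ≤
    ENNReal.ofReal ((ε * p ^ (1 / α) * ‖θ‖) ^ p)

lemma mul_rpow_div_le_exp_neg_one {α ε k σ η : ℝ} (hα : 1 ≤ α) (hk : 0 ≤ k)
    (hσ : 0 < σ) (hcond : 48 * ε * (4 * k) ^ (1 / α) ≤ σ ^ (1 - 1 / α)) (hη : σ ≤ η) :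
    16 * ε * (4 * k * η) ^ (1 / α) / η ≤ exp (-1) := by
  have hη₀ : 0 < η := hσ.trans_le hη
  have hα' : 0 ≤ 1 - 1 / α := sub_nonneg.2 (div_le_one_of_le₀ hα (by linarith))
  have hη_pow : 48 * ε * (4 * k) ^ (1 / α) * η ^ (1 / α) ≤ η := by
    calc _ ≤ η ^ (1 - 1 / α) * η ^ (1 / α) := by
          gcongr
          exact hcond.trans (rpow_le_rpow hσ.le hη hα')
      _ = η := by rw [← rpow_add hη₀, sub_add_cancel, rpow_one]
  have hthird : 1 / 3 ≤ exp (-1) := by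
    rw [exp_neg, one_div]
    exact inv_anti₀ (exp_pos 1) (by linarith [exp_one_lt_d9])
  rw [div_le_iff₀ hη₀, mul_rpow (by positivity) hη₀.le]
  nlinarith

variable [FiniteDimensional ℝ E] [BorelSpace E]

lemma HasPsiMoments.measure_le_abs_inner_le {ρ : Measure E} {α ε : ℝ} (hρ : HasPsiMoments ρ α ε)
    (hε : 0 ≤ ε) (θ : E) {p η : ℝ} (hp : 2 ≤ p) (hη : 0 < η) :
    ρ {z | η ≤ |⟪z, θ⟫|} ≤ ENNReal.ofReal ((ε * p ^ (1 / α) * ‖θ‖ / η) ^ p) :=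
  measure_le_abs_le_of_lintegral_rpow_le (by fun_prop) (by positivity) (by linarith) hη (hρ θ p hp)

lemma HasPsiMoments.hasInnerTail {ρ : Measure E} [IsProbabilityMeasure ρ] {α ε : ℝ}
    (hρ : HasPsiMoments ρ α ε) (hε : 0 ≤ ε) (hα : 1 ≤ α) {k : ℕ} {τ : ℝ}
    (hk : 1 / 2 ≤ k * τ ^ 2) (hcond : 48 * ε * (4 * k) ^ (1 / α) ≤ (τ ^ 2) ^ (1 - 1 / α)) :
    HasInnerTail (ballTruncation ρ) k τ := by
  intro η hη
  have hτ : 0 < τ ^ 2 := by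
    by_contra! h
    nlinarith [Nat.cast_nonneg (α := ℝ) k]
  have hη₀ : 0 < η := hτ.trans_le hη
  have hp : 2 ≤ 4 * k * η := by nlinarith [Nat.cast_nonneg (α := ℝ) k]
  have hslice : ∀ w ∈ Metric.closedBall (0 : E) 16,
      ballTruncation ρ {z | η ≤ |⟪z, w⟫|} ≤ ENNReal.ofReal (exp (-(4 * k * η))) := by
    intro w hw
    rw [mem_closedBall_zero_iff] at hw
    refine (ballTruncation_le ρ _).trans ((hρ.measure_le_abs_inner_le hε w hp hη₀).trans ?_)
    refine ENNReal.ofReal_le_ofReal ?_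
    calc (ε * (4 * k * η) ^ (1 / α) * ‖w‖ / η) ^ (4 * k * η)
        ≤ (16 * ε * (4 * k * η) ^ (1 / α) / η) ^ (4 * k * η) := by
          gcongr ?_ ^ _
          rw [mul_comm _ ‖w‖, ← mul_assoc]
          gcongr
      _ ≤ exp (-1) ^ (4 * k * η) := by
          gcongr
          exact mul_rpow_div_le_exp_neg_one hα (Nat.cast_nonneg k) hτ hcond hη
      _ = exp (-(4 * k * η)) := by rw [← exp_mul, neg_one_mul]
  calc ((ballTruncation ρ).prod (ballTruncation ρ)) {p | η ≤ |⟪p.1, p.2⟫|}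
      = ∫⁻ w, ballTruncation ρ {z | η ≤ |⟪z, w⟫|} ∂ballTruncation ρ :=
        Measure.prod_apply_symm (measurableSet_le measurable_const (by fun_prop))
    _ ≤ ∫⁻ _, ENNReal.ofReal (exp (-(4 * k * η))) ∂ballTruncation ρ :=
        setLIntegral_mono' measurableSet_closedBall hslice
    _ ≤ ENNReal.ofReal (exp (-(4 * k * η))) * 1 := by
        rw [lintegral_const]
        gcongr
        exact (ballTruncation_le ρ _).trans prob_le_one
    _ = ENNReal.ofReal (exp (-(4 * k * η))) := mul_one _

end PsiMoments

/-! ### Concentration of the norm -/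

section SecondMoment

variable {E : Type*} [NormedAddCommGroup E] [MeasurableSpace E] [OpensMeasurableSpace E]
  {ρ : Measure E}

lemma measureReal_le_norm_le_inv_sq (hρ : ∫⁻ z, ENNReal.ofReal (‖z‖ ^ 2) ∂ρ ≤ 1) {r : ℝ}
    (hr : 0 < r) : ρ.real {z | r ≤ ‖z‖} ≤ (1 / r) ^ 2 := by
  have htail := measure_le_abs_le_of_lintegral_rpow_le (μ := ρ) (f := norm) (m := 1) (p := 2)
    (by fun_prop) zero_le_one zero_le_two hr (by simpa using hρ)
  simp only [abs_norm, rpow_two] at htail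
  exact ENNReal.toReal_le_of_le_ofReal (by positivity) htail

variable [IsProbabilityMeasure ρ]

lemma three_div_four_le_measureReal_closedBall (hρ : ∫⁻ z, ENNReal.ofReal (‖z‖ ^ 2) ∂ρ ≤ 1) :
    3 / 4 ≤ ρ.real (Metric.closedBall 0 2) := by
  have hcompl : ρ.real (Metric.closedBall 0 2)ᶜ ≤ (1 / 2) ^ 2 := by
    refine (measureReal_mono fun z hz ↦ ?_).trans (measureReal_le_norm_le_inv_sq hρ two_pos)
    rw [Set.mem_compl_iff, mem_closedBall_zero_iff, not_le] at hz
    exact hz.le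
  rw [probReal_compl_eq_one_sub measurableSet_closedBall] at hcompl
  linarith

variable [NormedSpace ℝ E]

lemma IsPrekopaLeindler.measureReal_norm_ge_le_of_annulus (hPL : IsPrekopaLeindler ρ)
    (hρ : ∫⁻ z, ENNReal.ofReal (‖z‖ ^ 2) ∂ρ ≤ 1) {L : ℝ}
    (hL : 4 / 3 * ρ.real (annulus E 5 16) ≤ exp (-L)) (hL_half : exp (-L) ≤ 1 / 2) {s : ℝ}
    (hs : 7 ≤ s) : ρ.real {z | s ≤ ‖z‖} ≤ 2 * exp (-(L * (s / 14))) := by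
  simpa using hPL.measureReal_norm_ge_le one_pos
    (by simpa using three_div_four_le_measureReal_closedBall hρ) (by simpa using hL) hL_half
    (by simpa using hs)

lemma IsPrekopaLeindler.measureReal_norm_ge_le_log_two (hPL : IsPrekopaLeindler ρ)
    (hρ : ∫⁻ z, ENNReal.ofReal (‖z‖ ^ 2) ∂ρ ≤ 1) {s : ℝ} (hs : 7 ≤ s) :
    ρ.real {z | s ≤ ‖z‖} ≤ 2 * exp (-(log 2 * (s / 14))) := by
  have hexp : exp (-log 2) = 1 / 2 := by rw [exp_neg, exp_log two_pos, one_div]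
  have hannulus : ρ.real (annulus E 5 16) ≤ (1 / 5) ^ 2 :=
    (measureReal_mono fun z hz ↦ hz.1).trans
      (measureReal_le_norm_le_inv_sq hρ (by norm_num : (0 : ℝ) < 5))
  exact hPL.measureReal_norm_ge_le_of_annulus hρ (by rw [hexp]; linarith) hexp.le hs

end SecondMoment

section Concentration

variable {E : Type*} [NormedAddCommGroup E] [MeasurableSpace E] [OpensMeasurableSpace E]
  {ρ : Measure E} {k : ℕ} {τ a : ℝ}

lemma ConcentratesNear.measureReal_inter_closedBall_le (h : ConcentratesNear ρ k τ a) {d : ℕ}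
    (hd : 7200 ≤ d) : ρ.real ({z | d * τ ≤ |liftedNorm z - a|} ∩ Metric.closedBall 0 16) ≤
      8 * exp (-(2 * (k * τ ^ 2) * d)) := by
  rw [← measureReal_restrict_apply' measurableSet_closedBall]
  exact h d hd

lemma ConcentratesNear.measureReal_le_of_subset [IsFiniteMeasure ρ] (h : ConcentratesNear ρ k τ a)
    (hτ : 0 < τ) (hτ_le : τ ≤ 1 / 10 ^ 6) {S : Set E} (hS : S ⊆ Metric.closedBall 0 16)
    (hdist : ∀ z ∈ S, 11 / 10 ≤ |liftedNorm z - a|) : ρ.real S ≤ 8 * exp (-(2 * (k * τ))) := by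
  have hinv : 10 ^ 6 ≤ 1 / τ := by rwa [le_div_comm₀ (by norm_num) hτ]
  have hceil : 1 / τ ≤ ⌈1 / τ⌉₊ := Nat.le_ceil _
  have hceil_mul : ⌈1 / τ⌉₊ * τ ≤ 11 / 10 := by
    calc ⌈1 / τ⌉₊ * τ ≤ (1 / τ + 1) * τ := by
          gcongr
          exact (Nat.ceil_lt_add_one (by positivity)).le
      _ = 1 + τ := by field_simp
      _ ≤ 11 / 10 := by linarith
  have hlarge : 7200 ≤ ⌈1 / τ⌉₊ := by
    have : ((7200 : ℕ) : ℝ) ≤ ⌈1 / τ⌉₊ := by push_cast; linarith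
    exact_mod_cast this
  calc ρ.real S
      ≤ ρ.real ({z | ⌈1 / τ⌉₊ * τ ≤ |liftedNorm z - a|} ∩ Metric.closedBall 0 16) :=
        measureReal_mono fun z hz ↦ ⟨hceil_mul.trans (hdist z hz), hS hz⟩
    _ ≤ 8 * exp (-(2 * (k * τ ^ 2) * ⌈1 / τ⌉₊)) := h.measureReal_inter_closedBall_le hlarge
    _ ≤ 8 * exp (-(2 * (k * τ ^ 2) * (1 / τ))) := by gcongr
    _ = 8 * exp (-(2 * (k * τ))) := by field_simp

lemma mul_exp_neg_le_one_half {y : ℝ} (hy : 100 ≤ y) : 32 / 3 * exp (-y) ≤ 1 / 2 := by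
  rw [exp_neg, ← div_eq_mul_inv, div_le_iff₀ (exp_pos y)]
  linarith [add_one_le_exp y]

variable [IsProbabilityMeasure ρ]

lemma ConcentratesNear.center_lt (h : ConcentratesNear ρ k τ a)
    (hρ : ∫⁻ z, ENNReal.ofReal (‖z‖ ^ 2) ∂ρ ≤ 1) (hτ : 0 < τ) (hτ_le : τ ≤ 1 / 10 ^ 6)
    (hkτ : 100 ≤ k * τ) : a < 7 / 2 := by
  by_contra! ha
  have hfar : ∀ z ∈ Metric.closedBall (0 : E) 2, 11 / 10 ≤ |liftedNorm z - a| := by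
    intro z hz
    rw [mem_closedBall_zero_iff] at hz
    have hV : liftedNorm z ≤ 12 / 5 :=
      Real.sqrt_le_iff.2 ⟨by norm_num, by nlinarith [norm_nonneg z]⟩
    rw [abs_sub_comm]
    exact le_trans (by linarith) (le_abs_self _)
  have hlight := h.measureReal_le_of_subset hτ hτ_le
    (Metric.closedBall_subset_closedBall (by norm_num)) hfar
  linarith [three_div_four_le_measureReal_closedBall hρ,
    mul_exp_neg_le_one_half (show 100 ≤ 2 * (k * τ) by linarith)]

lemma ConcentratesNear.measureReal_norm_ge_le [NormedSpace ℝ E] (h : ConcentratesNear ρ k τ a)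
    (hPL : IsPrekopaLeindler ρ) (hρ : ∫⁻ z, ENNReal.ofReal (‖z‖ ^ 2) ∂ρ ≤ 1) (hτ : 0 < τ)
    (hτ_le : τ ≤ 1 / 10 ^ 6) (hkτ : 100 ≤ k * τ) {s : ℝ} (hs : 7 ≤ s) :
    ρ.real {z | s ≤ ‖z‖} ≤ 2 * exp (-(k * τ * (s / 14))) := by
  have ha := h.center_lt hρ hτ hτ_le hkτ
  have hfar : ∀ z ∈ annulus E 5 16, 11 / 10 ≤ |liftedNorm z - a| := by
    intro z hz
    have hV : 5 ≤ liftedNorm z := Real.le_sqrt_of_sq_le (by nlinarith [hz.1])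
    exact le_trans (by linarith) (le_abs_self _)
  have hannulus := h.measureReal_le_of_subset hτ hτ_le
    (fun z hz ↦ mem_closedBall_zero_iff.2 hz.2) hfar
  have hsq : exp (-(2 * (k * τ))) = exp (-(k * τ)) * exp (-(k * τ)) := by
    rw [← exp_add]
    ring_nf
  have hhalf := mul_exp_neg_le_one_half hkτ
  refine hPL.measureReal_norm_ge_le_of_annulus hρ ?_ ?_ hs
  · nlinarith [exp_pos (-(k * τ))]
  · linarith [exp_pos (-(k * τ))]

end Concentration

section Center

variable {E : Type*} [NormedAddCommGroup E] {a : ℝ}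

lemma abs_norm_sub_one_le (z : E) : |‖z‖ - 1| ≤ 3 * |liftedNorm z - √2| := by
  have hV := liftedNorm_sq z
  have hV₀ := liftedNorm_pos z
  have hz := norm_nonneg z
  have hV_le : liftedNorm z ≤ ‖z‖ + 1 := by nlinarith
  have hsqrt : √2 ^ 2 = 2 := sq_sqrt zero_le_two
  have hsqrt_le : √2 ≤ 2 := by nlinarith [sqrt_nonneg 2]
  refine le_of_mul_le_mul_right ?_ (by positivity : 0 < ‖z‖ + 1)
  calc |‖z‖ - 1| * (‖z‖ + 1) = |(‖z‖ - 1) * (‖z‖ + 1)| := by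
        rw [abs_mul, abs_of_nonneg (by positivity : 0 ≤ ‖z‖ + 1)]
    _ = |(liftedNorm z - √2) * (liftedNorm z + √2)| := by
        congr 1
        linear_combination hsqrt - hV
    _ = |liftedNorm z - √2| * (liftedNorm z + √2) := by
        rw [abs_mul, abs_of_nonneg (by positivity : 0 ≤ liftedNorm z + √2)]
    _ ≤ |liftedNorm z - √2| * (3 * (‖z‖ + 1)) := by
        gcongr
        linarith
    _ = 3 * |liftedNorm z - √2| * (‖z‖ + 1) := by ring

lemma abs_liftedNorm_sq_sub_sq_le_of_mem {z : E} (ha : 0 ≤ a) (ha_lt : a < 7 / 2)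
    (hz : z ∈ Metric.closedBall 0 16) :
    |liftedNorm z ^ 2 - a ^ 2| ≤ 21 * |liftedNorm z - a| := by
  have hV : liftedNorm z ≤ 17 := liftedNorm_le_of_mem_closedBall hz
  have hV₀ := liftedNorm_pos z
  rw [sq_sub_sq, abs_mul, abs_of_nonneg (by linarith : 0 ≤ liftedNorm z + a)]
  gcongr
  linarith

lemma abs_liftedNorm_sq_sub_sq_le_of_notMem {z : E} (ha : 0 ≤ a) (ha_lt : a < 7 / 2)
    (hz : z ∉ Metric.closedBall 0 16) : |liftedNorm z ^ 2 - a ^ 2| ≤ 2 * ‖z‖ ^ 2 := by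
  rw [mem_closedBall_zero_iff, not_le] at hz
  rw [liftedNorm_sq, abs_of_nonneg (by nlinarith)]
  nlinarith

variable [MeasurableSpace E] [OpensMeasurableSpace E] {ρ : Measure E} {k : ℕ} {τ : ℝ}

lemma ConcentratesNear.lintegral_abs_sub_le [IsProbabilityMeasure ρ]
    (h : ConcentratesNear ρ k τ a) (hτ : 0 < τ) (hk : 1 / 2 ≤ k * τ ^ 2) :
    ∫⁻ z, ENNReal.ofReal |liftedNorm z - a| ∂ballTruncation ρ ≤ ENNReal.ofReal (7208 * τ) := by
  have hV : Measurable (liftedNorm : E → ℝ) := measurable_liftedNorm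
  set f : E → ℝ := fun z ↦ max (|liftedNorm z - a| - 7200 * τ) 0
  have htail : ∀ t, 0 < t → (ballTruncation ρ).real {z | t ≤ f z} ≤ 8 * exp (-(1 / τ * t)) := by
    intro t ht
    set d : ℕ := ⌊7200 + t / τ⌋₊
    have hd : d ≤ 7200 + t / τ := Nat.floor_le (by positivity)
    have hd' : 7200 + t / τ < d + 1 := Nat.lt_floor_add_one _
    have hsubset : {z | t ≤ f z} ⊆ {z | d * τ ≤ |liftedNorm z - a|} := by
      intro z hz
      have hz : t ≤ |liftedNorm z - a| - 7200 * τ := (le_max_iff.1 hz).resolve_right ht.not_ge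
      calc d * τ ≤ (7200 + t / τ) * τ := by gcongr
        _ = 7200 * τ + t := by field_simp
        _ ≤ |liftedNorm z - a| := by linarith
    refine (measureReal_mono hsubset).trans ((h d (Nat.le_floor ?_)).trans ?_)
    · push_cast
      linarith [div_pos ht hτ]
    · rw [one_div_mul_eq_div]
      gcongr
      nlinarith [div_pos ht hτ]
  have hf := lintegral_rpow_le_of_exp_tail (by fun_prop : AEMeasurable f (ballTruncation ρ))
    (fun z ↦ le_max_right _ _) (by norm_num) (one_div_pos.2 hτ) one_pos htail
  simp only [rpow_one, one_div_one_div, one_mul, Gamma_one, mul_one] at hf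
  calc ∫⁻ z, ENNReal.ofReal |liftedNorm z - a| ∂ballTruncation ρ
      ≤ ∫⁻ z, (ENNReal.ofReal (7200 * τ) + ENNReal.ofReal (f z)) ∂ballTruncation ρ := by
        refine lintegral_mono fun z ↦ ?_
        rw [← ENNReal.ofReal_add (by positivity) (le_max_right _ _)]
        refine ENNReal.ofReal_le_ofReal ?_
        linarith [le_max_left (|liftedNorm z - a| - 7200 * τ) 0]
    _ ≤ ENNReal.ofReal (7200 * τ) * 1 + ENNReal.ofReal (8 * τ) := by
        rw [lintegral_add_left measurable_const, lintegral_const]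
        gcongr
        exact (ballTruncation_le ρ _).trans prob_le_one
    _ = ENNReal.ofReal (7208 * τ) := by
        rw [mul_one, ← ENNReal.ofReal_add (by positivity) (by positivity)]
        ring_nf

lemma setLIntegral_compl_closedBall_norm_sq_le [IsFiniteMeasure ρ] {L : ℝ} (hL : 0 < L)
    (htail : ∀ s, 7 ≤ s → ρ.real {z | s ≤ ‖z‖} ≤ 2 * exp (-(L * (s / 14)))) :
    ∫⁻ z in (Metric.closedBall 0 16)ᶜ, ENNReal.ofReal (‖z‖ ^ 2) ∂ρ ≤
      ENNReal.ofReal (784 / L ^ 2) := by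
  have htail' : ∀ t, 0 < t → (ρ.restrict (Metric.closedBall 0 16)ᶜ).real {z | t ≤ ‖z‖} ≤
      2 * exp (-(L / 14 * t)) := by
    intro t _
    rw [measureReal_restrict_apply' measurableSet_closedBall.compl]
    calc ρ.real ({z | t ≤ ‖z‖} ∩ (Metric.closedBall 0 16)ᶜ)
        ≤ ρ.real {z | max 16 t ≤ ‖z‖} := by
          refine measureReal_mono fun z ⟨hzt, hz⟩ ↦ ?_
          rw [Set.mem_compl_iff, mem_closedBall_zero_iff, not_le] at hz
          exact max_le hz.le hzt
      _ ≤ 2 * exp (-(L * (max 16 t / 14))) :=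
          htail _ ((by norm_num : (7 : ℝ) ≤ 16).trans (le_max_left _ _))
      _ ≤ 2 * exp (-(L * (t / 14))) := by
          gcongr
          exact le_max_right _ _
      _ = 2 * exp (-(L / 14 * t)) := by ring_nf
  have hmoment := lintegral_rpow_le_of_exp_tail (by fun_prop) (fun z : E ↦ norm_nonneg z)
    zero_le_two (by positivity) two_pos htail'
  simp only [rpow_two, Gamma_two, mul_one] at hmoment
  refine hmoment.trans_eq ?_
  congr 1
  field_simp
  norm_num

lemma ofReal_abs_two_sub_sq_le [IsProbabilityMeasure ρ]
    (hρ : ∫⁻ z, ENNReal.ofReal (‖z‖ ^ 2) ∂ρ = 1) :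
    ENNReal.ofReal |2 - a ^ 2| ≤ ∫⁻ z, ENNReal.ofReal |liftedNorm z ^ 2 - a ^ 2| ∂ρ := by
  have hint : Integrable (fun z : E ↦ ‖z‖ ^ 2) ρ := by
    refine ⟨by fun_prop, ?_⟩
    rw [hasFiniteIntegral_iff_ofReal (.of_forall fun z ↦ by positivity), hρ]
    exact ENNReal.one_lt_top
  have hmoment : ∫ z, ‖z‖ ^ 2 ∂ρ = 1 := by
    rw [integral_eq_lintegral_of_nonneg_ae (.of_forall fun z ↦ by positivity) hint.1, hρ,
      ENNReal.toReal_one]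
  have hval : ∫ z, (liftedNorm z ^ 2 - a ^ 2) ∂ρ = 2 - a ^ 2 := by
    have hadd : Integrable (fun z : E ↦ 1 + ‖z‖ ^ 2) ρ := (integrable_const _).add hint
    simp_rw [liftedNorm_sq]
    rw [integral_sub hadd (integrable_const _), integral_add (integrable_const _) hint, hmoment]
    simp only [integral_const, probReal_univ, one_smul]
    norm_num
  rw [← hval]
  simpa only [← Real.enorm_eq_ofReal_abs] using enorm_integral_le_lintegral_enorm _

lemma ConcentratesNear.setLIntegral_closedBall_abs_sq_sub_sq_le [IsProbabilityMeasure ρ]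
    (h : ConcentratesNear ρ k τ a) (hτ : 0 < τ) (hk : 1 / 2 ≤ k * τ ^ 2) (ha : 0 ≤ a)
    (ha_lt : a < 7 / 2) :
    ∫⁻ z in Metric.closedBall 0 16, ENNReal.ofReal |liftedNorm z ^ 2 - a ^ 2| ∂ρ ≤
      ENNReal.ofReal (151368 * τ) := by
  calc ∫⁻ z in Metric.closedBall 0 16, ENNReal.ofReal |liftedNorm z ^ 2 - a ^ 2| ∂ρ
      ≤ ∫⁻ z in Metric.closedBall 0 16,
          ENNReal.ofReal 21 * ENNReal.ofReal |liftedNorm z - a| ∂ρ := by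
        refine setLIntegral_mono' measurableSet_closedBall fun z hz ↦ ?_
        rw [← ENNReal.ofReal_mul (by norm_num)]
        exact ENNReal.ofReal_le_ofReal (abs_liftedNorm_sq_sub_sq_le_of_mem ha ha_lt hz)
    _ = ENNReal.ofReal 21 * ∫⁻ z, ENNReal.ofReal |liftedNorm z - a| ∂ballTruncation ρ :=
        lintegral_const_mul' _ _ ENNReal.ofReal_ne_top
    _ ≤ ENNReal.ofReal 21 * ENNReal.ofReal (7208 * τ) := by
        gcongr
        exact h.lintegral_abs_sub_le hτ hk
    _ = ENNReal.ofReal (151368 * τ) := by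
        rw [← ENNReal.ofReal_mul (by norm_num)]
        ring_nf

lemma setLIntegral_compl_closedBall_abs_sq_sub_sq_le [IsFiniteMeasure ρ] {L : ℝ} (hτ : 0 < τ)
    (hτ_le : τ ≤ 1) (hL : 1 / (2 * τ) ≤ L) (ha : 0 ≤ a) (ha_lt : a < 7 / 2)
    (htail : ∀ s, 7 ≤ s → ρ.real {z | s ≤ ‖z‖} ≤ 2 * exp (-(L * (s / 14)))) :
    ∫⁻ z in (Metric.closedBall 0 16)ᶜ, ENNReal.ofReal |liftedNorm z ^ 2 - a ^ 2| ∂ρ ≤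
      ENNReal.ofReal (6272 * τ) := by
  have hL₀ : 0 < L := (by positivity : (0 : ℝ) < 1 / (2 * τ)).trans_le hL
  calc ∫⁻ z in (Metric.closedBall 0 16)ᶜ, ENNReal.ofReal |liftedNorm z ^ 2 - a ^ 2| ∂ρ
      ≤ ∫⁻ z in (Metric.closedBall 0 16)ᶜ, ENNReal.ofReal 2 * ENNReal.ofReal (‖z‖ ^ 2) ∂ρ := by
        refine setLIntegral_mono' measurableSet_closedBall.compl fun z hz ↦ ?_
        rw [← ENNReal.ofReal_mul (by norm_num)]
        exact ENNReal.ofReal_le_ofReal (abs_liftedNorm_sq_sub_sq_le_of_notMem ha ha_lt hz)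
    _ = ENNReal.ofReal 2 * ∫⁻ z in (Metric.closedBall 0 16)ᶜ, ENNReal.ofReal (‖z‖ ^ 2) ∂ρ :=
        lintegral_const_mul' _ _ ENNReal.ofReal_ne_top
    _ ≤ ENNReal.ofReal 2 * ENNReal.ofReal (784 / L ^ 2) := by
        gcongr
        exact setLIntegral_compl_closedBall_norm_sq_le hL₀ htail
    _ = ENNReal.ofReal (2 * (784 / L ^ 2)) := (ENNReal.ofReal_mul (by norm_num)).symm
    _ ≤ ENNReal.ofReal (6272 * τ) := by
        refine ENNReal.ofReal_le_ofReal ?_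
        calc 2 * (784 / L ^ 2) ≤ 2 * (784 / (1 / (2 * τ)) ^ 2) := by gcongr
          _ = 6272 * (τ * τ) := by
            field_simp
            norm_num
          _ ≤ 6272 * (τ * 1) := by gcongr
          _ = 6272 * τ := by rw [mul_one]

lemma ConcentratesNear.abs_two_sub_sq_le [IsProbabilityMeasure ρ] (h : ConcentratesNear ρ k τ a)
    (hρ : ∫⁻ z, ENNReal.ofReal (‖z‖ ^ 2) ∂ρ = 1) (hτ : 0 < τ) (hτ_le : τ ≤ 1)
    (hk : 1 / 2 ≤ k * τ ^ 2) (ha : 0 ≤ a) (ha_lt : a < 7 / 2)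
    (htail : ∀ s, 7 ≤ s → ρ.real {z | s ≤ ‖z‖} ≤ 2 * exp (-(k * τ * (s / 14)))) :
    |2 - a ^ 2| ≤ 157640 * τ := by
  have hL : 1 / (2 * τ) ≤ k * τ := by
    rw [div_le_iff₀ (by positivity)]
    linarith
  rw [← ENNReal.ofReal_le_ofReal_iff (by positivity)]
  calc ENNReal.ofReal |2 - a ^ 2| ≤ ∫⁻ z, ENNReal.ofReal |liftedNorm z ^ 2 - a ^ 2| ∂ρ :=
        ofReal_abs_two_sub_sq_le hρ
    _ ≤ ENNReal.ofReal (151368 * τ) + ENNReal.ofReal (6272 * τ) := by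
        rw [← lintegral_add_compl _ (measurableSet_closedBall (x := (0 : E)) (ε := 16))]
        exact add_le_add (h.setLIntegral_closedBall_abs_sq_sub_sq_le hτ hk ha ha_lt)
          (setLIntegral_compl_closedBall_abs_sq_sub_sq_le hτ hτ_le hL ha ha_lt htail)
    _ = ENNReal.ofReal (157640 * τ) := by
        rw [← ENNReal.ofReal_add (by positivity) (by positivity)]
        ring_nf

lemma ConcentratesNear.abs_sub_sqrt_two_le [IsProbabilityMeasure ρ] (h : ConcentratesNear ρ k τ a)
    (hρ : ∫⁻ z, ENNReal.ofReal (‖z‖ ^ 2) ∂ρ = 1) (hτ : 0 < τ) (hτ_le : τ ≤ 1)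
    (hk : 1 / 2 ≤ k * τ ^ 2) (ha : 0 ≤ a) (ha_lt : a < 7 / 2)
    (htail : ∀ s, 7 ≤ s → ρ.real {z | s ≤ ‖z‖} ≤ 2 * exp (-(k * τ * (s / 14)))) :
    |a - √2| ≤ 157640 * τ := by
  have hsqrt : 1 ≤ √2 := by
    rw [one_le_sqrt]
    norm_num
  calc |a - √2| = |a - √2| * 1 := (mul_one _).symm
    _ ≤ |a - √2| * |a + √2| := by
        gcongr
        exact (by linarith : 1 ≤ a + √2).trans (le_abs_self _)
    _ = |2 - a ^ 2| := by
        rw [← abs_mul, mul_comm, ← sq_sub_sq, sq_sqrt zero_le_two, abs_sub_comm]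
    _ ≤ 157640 * τ := h.abs_two_sub_sq_le hρ hτ hτ_le hk ha ha_lt htail

lemma ConcentratesNear.measureReal_le_abs_norm_sub_one_le [IsProbabilityMeasure ρ]
    (h : ConcentratesNear ρ k τ a) (hτ : 0 < τ) (hτ_le : τ ≤ 1) (ha : |a - √2| ≤ 157640 * τ)
    (htail : ∀ s, 7 ≤ s → ρ.real {z | s ≤ ‖z‖} ≤ 2 * exp (-(k * τ * (s / 14)))) :
    ρ.real {z | 10 ^ 6 * τ ≤ |‖z‖ - 1|} ≤ 10 * exp (-(k * τ ^ 2)) := by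
  have hkτ : 0 ≤ k * τ ^ 2 := by positivity
  have hsubset : {z : E | 10 ^ 6 * τ ≤ |‖z‖ - 1|} ⊆
      ({z | (7200 : ℕ) * τ ≤ |liftedNorm z - a|} ∩ Metric.closedBall 0 16) ∪ {z | 16 ≤ ‖z‖} := by
    intro z hz
    rcases le_or_gt 16 ‖z‖ with hz16 | hz16
    · exact Or.inr hz16
    refine Or.inl ⟨?_, mem_closedBall_zero_iff.2 hz16.le⟩
    have hz : 10 ^ 6 * τ ≤ |‖z‖ - 1| := hz
    have htriangle : |liftedNorm z - √2| ≤ |liftedNorm z - a| + |a - √2| := abs_sub_le _ _ _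
    change (7200 : ℕ) * τ ≤ |liftedNorm z - a|
    push_cast
    linarith [abs_norm_sub_one_le z]
  have hin : ρ.real ({z | (7200 : ℕ) * τ ≤ |liftedNorm z - a|} ∩ Metric.closedBall 0 16) ≤
      8 * exp (-(k * τ ^ 2)) := by
    refine (h.measureReal_inter_closedBall_le le_rfl).trans ?_
    gcongr 8 * exp (-?_)
    push_cast
    linarith
  have hout : ρ.real {z | 16 ≤ ‖z‖} ≤ 2 * exp (-(k * τ ^ 2)) := by
    refine (htail 16 (by norm_num)).trans ?_
    gcongr 2 * exp (-?_)
    nlinarith [mul_nonneg k.cast_nonneg hτ.le]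
  calc ρ.real {z | 10 ^ 6 * τ ≤ |‖z‖ - 1|} ≤ _ := measureReal_mono hsubset
    _ ≤ _ := measureReal_union_le _ _
    _ ≤ 8 * exp (-(k * τ ^ 2)) + 2 * exp (-(k * τ ^ 2)) := add_le_add hin hout
    _ = 10 * exp (-(k * τ ^ 2)) := by ring

end Center

/-! ### The deviation inequality for measures of unit second moment -/

/-- The factor `κ` in the number `κ t ^ α ε ^ (-α)` of Gaussian vectors used at deviation `t`. Its
value makes `mul_rpow_le_rpow_of_le` applicable with `τ = t / 10 ^ 6`. -/
def gaussianCountConst : ℝ := (1 / 10 ^ 6 / 96) ^ 2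

/-- The constant multiplying `t ^ (2 + α) ε ^ (-α)` in the exponent of the bound for `t ≤ 1`. It is
`κ` times `(τ / t) ^ 2`, because `k` Gaussian vectors and shells of width `τ` give a probability
of about `exp (-k τ ^ 2)`. -/
def deviationConst : ℝ := gaussianCountConst * (1 / 10 ^ 6) ^ 2

lemma gaussianCountConst_pos : 0 < gaussianCountConst := by
  unfold gaussianCountConst
  positivity

lemma deviationConst_pos : 0 < deviationConst :=
  mul_pos gaussianCountConst_pos (by positivity)

lemma rpow_one_div_le_mul_of_le_sq_mul_rpow {α c u x : ℝ} (hα : 0 < α) (hα_le : α ≤ 2)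
    (hc : 0 < c) (hc_le : c ≤ 1) (hu : 0 ≤ u) (hx : 0 ≤ x) (h : x ≤ c ^ 2 * u ^ α) :
    x ^ (1 / α) ≤ c * u := by
  calc x ^ (1 / α) ≤ (c ^ 2 * u ^ α) ^ (1 / α) := rpow_le_rpow hx h (by positivity)
    _ = c ^ (2 * (1 / α)) * u := by
      rw [mul_rpow (by positivity) (by positivity), ← rpow_mul hu, mul_one_div_cancel hα.ne',
        rpow_one, ← rpow_two, ← rpow_mul hc.le]
    _ ≤ c ^ (1 : ℝ) * u := by
      gcongr ?_ * u
      refine rpow_le_rpow_of_exponent_ge hc hc_le ?_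
      rwa [mul_one_div, one_le_div hα]
    _ = c * u := by rw [rpow_one]

lemma le_sq_rpow_one_sub_one_div {α x : ℝ} (hα : 0 < α) (hα_le : α ≤ 2) (hx : 0 < x)
    (hx_le : x ≤ 1) : x ≤ (x ^ 2) ^ (1 - 1 / α) := by
  rw [← rpow_two, ← rpow_mul hx.le]
  refine (rpow_one x).symm.le.trans (rpow_le_rpow_of_exponent_ge hx hx_le ?_)
  linarith [one_div_le_one_div_of_le hα hα_le]

lemma mul_rpow_le_rpow_of_le {ε α c t k : ℝ} (hε : 0 < ε) (hα : 0 < α) (hα_le : α ≤ 2)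
    (hc : 0 < c) (hc_le : c ≤ 1) (ht : 0 < t) (ht_le : t ≤ 1) (hk : 0 ≤ k)
    (hk_le : k ≤ (c / 96) ^ 2 * (t ^ α * ε ^ (-α))) :
    48 * ε * (4 * k) ^ (1 / α) ≤ ((c * t) ^ 2) ^ (1 - 1 / α) := by
  have hroot : (4 * k) ^ (1 / α) ≤ c / 48 * (t / ε) := by
    refine rpow_one_div_le_mul_of_le_sq_mul_rpow hα hα_le (by positivity) (by linarith)
      (by positivity) (by positivity) ?_
    rw [div_rpow ht.le hε.le, div_eq_mul_inv (t ^ α), ← rpow_neg hε.le]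
    linarith
  calc 48 * ε * (4 * k) ^ (1 / α) ≤ 48 * ε * (c / 48 * (t / ε)) := by gcongr
    _ = c * t := by field_simp
    _ ≤ ((c * t) ^ 2) ^ (1 - 1 / α) :=
      le_sq_rpow_one_sub_one_div hα hα_le (by positivity) (mul_le_one₀ hc_le ht.le ht_le)

section Deviation

variable {E : Type*} [NormedAddCommGroup E] [InnerProductSpace ℝ E] [FiniteDimensional ℝ E]
  [MeasurableSpace E] [BorelSpace E] {ρ : Measure E} [IsProbabilityMeasure ρ]

lemma HasInnerTail.measureReal_norm_deviation_le (hPL : IsPrekopaLeindler ρ)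
    (hρ : ∫⁻ z, ENNReal.ofReal (‖z‖ ^ 2) ∂ρ = 1) {k : ℕ} {τ : ℝ}
    (h : HasInnerTail (ballTruncation ρ) k τ) (hτ : 0 < τ) (hτ_le : τ ≤ 1 / 10 ^ 6)
    (hk : 1 / 2 ≤ k * τ ^ 2) :
    (∀ s, 7 ≤ s → ρ.real {z | s ≤ ‖z‖} ≤ 2 * exp (-(k * τ * (s / 14)))) ∧
      ρ.real {z | 10 ^ 6 * τ ≤ |‖z‖ - 1|} ≤ 10 * exp (-(k * τ ^ 2)) := by
  have hτ_one : τ ≤ 1 := by linarith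
  have hkτ : 100 ≤ k * τ := by nlinarith
  obtain ⟨a, ha, hconc⟩ := h.exists_concentratesNear hPL hτ (by linarith) hk
  have ha_lt : a < 7 / 2 := hconc.center_lt hρ.le hτ hτ_le hkτ
  have htail (s : ℝ) (hs : 7 ≤ s) : ρ.real {z | s ≤ ‖z‖} ≤ 2 * exp (-(k * τ * (s / 14))) :=
    hconc.measureReal_norm_ge_le hPL hρ.le hτ hτ_le hkτ hs
  exact ⟨htail, hconc.measureReal_le_abs_norm_sub_one_le hτ hτ_one
    (hconc.abs_sub_sqrt_two_le hρ hτ hτ_one hk ha ha_lt htail) htail⟩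

variable {α ε : ℝ}

/-- The alternative `y < 1 / 2` occurs when `t ^ α ε ^ (-α)` is too small for a single Gaussian
vector. -/
lemma HasPsiMoments.exists_deviation_rate (hmom : HasPsiMoments ρ α ε) (hPL : IsPrekopaLeindler ρ)
    (hρ : ∫⁻ z, ENNReal.ofReal (‖z‖ ^ 2) ∂ρ = 1) (hε : 0 < ε) (hα : 1 ≤ α) (hα_le : α ≤ 2)
    {t : ℝ} (ht : 0 < t) (ht_le : t ≤ 1) :
    ∃ y, deviationConst * ε ^ (-α) * t ^ (2 + α) ≤ y + 1 ∧ (y < 1 / 2 ∨ (1 / 2 ≤ y ∧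
      (∀ s, 7 ≤ s → ρ.real {z | s ≤ ‖z‖} ≤ 2 * exp (-(y * (s / 14)))) ∧
      ρ.real {z | t ≤ |‖z‖ - 1|} ≤ 10 * exp (-y))) := by
  have hκ := gaussianCountConst_pos
  set τ : ℝ := 1 / 10 ^ 6 * t with hτ_def
  have hτ : 0 < τ := by positivity
  have hτ_le : τ ≤ 1 / 10 ^ 6 := by linarith
  set k : ℕ := ⌊gaussianCountConst * (t ^ α * ε ^ (-α))⌋₊
  have hk_le : k ≤ gaussianCountConst * (t ^ α * ε ^ (-α)) := Nat.floor_le (by positivity)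
  have hk_gt : gaussianCountConst * (t ^ α * ε ^ (-α)) < k + 1 := Nat.lt_floor_add_one _
  refine ⟨k * τ ^ 2, ?_, (lt_or_ge (k * τ ^ 2) (1 / 2)).imp_right fun hk ↦ ⟨hk, ?_⟩⟩
  · calc deviationConst * ε ^ (-α) * t ^ (2 + α)
        = gaussianCountConst * (t ^ α * ε ^ (-α)) * τ ^ 2 := by
          rw [rpow_add ht, rpow_two, hτ_def, deviationConst]
          ring
      _ ≤ (k + 1) * τ ^ 2 := by gcongr
      _ ≤ k * τ ^ 2 + 1 := by nlinarith
  · have hinner : HasInnerTail (ballTruncation ρ) k τ :=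
      hmom.hasInnerTail hε.le hα hk (mul_rpow_le_rpow_of_le hε (by linarith) hα_le (by norm_num)
        (by norm_num) ht ht_le k.cast_nonneg hk_le)
    obtain ⟨htail, hdev⟩ := hinner.measureReal_norm_deviation_le hPL hρ hτ hτ_le hk
    rw [hτ_def, ← mul_assoc, mul_one_div_cancel (by norm_num), one_mul] at hdev
    refine ⟨fun s hs ↦ (htail s hs).trans ?_, hdev⟩
    have hkτ : k * τ ^ 2 ≤ k * τ := by
      gcongr
      nlinarith
    gcongr

lemma HasPsiMoments.measureReal_deviation_le_of_le_one (hmom : HasPsiMoments ρ α ε)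
    (hPL : IsPrekopaLeindler ρ) (hρ : ∫⁻ z, ENNReal.ofReal (‖z‖ ^ 2) ∂ρ = 1) (hε : 0 < ε)
    (hα : 1 ≤ α) (hα_le : α ≤ 2) {t : ℝ} (ht : 0 < t) (ht_le : t ≤ 1) :
    ρ.real {z | t ≤ |‖z‖ - 1|} ≤ 30 * exp (-(deviationConst * ε ^ (-α) * t ^ (2 + α))) := by
  obtain ⟨y, hy, hrate⟩ := hmom.exists_deviation_rate hPL hρ hε hα hα_le ht ht_le
  have hexp : 10 * exp (-y) ≤ 30 * exp (-(deviationConst * ε ^ (-α) * t ^ (2 + α))) := by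
    calc 10 * exp (-y) = 10 * (exp 1 * exp (-(y + 1))) := by
          rw [← exp_add]
          ring_nf
      _ ≤ 10 * (3 * exp (-(deviationConst * ε ^ (-α) * t ^ (2 + α)))) := by
          gcongr
          linarith [exp_one_lt_d9]
      _ = _ := by ring
  rcases hrate with hy_lt | ⟨-, -, hdev⟩
  · refine measureReal_le_one.trans (le_trans ?_ hexp)
    linarith [add_one_le_exp (-y)]
  · exact hdev.trans hexp

lemma HasPsiMoments.measureReal_norm_ge_le (hmom : HasPsiMoments ρ α ε)
    (hPL : IsPrekopaLeindler ρ) (hρ : ∫⁻ z, ENNReal.ofReal (‖z‖ ^ 2) ∂ρ = 1) (hε : 0 < ε)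
    (hα : 1 ≤ α) (hα_le : α ≤ 2) {t : ℝ} (ht : 7 ≤ t) :
    ρ.real {z | t ≤ ‖z‖} ≤ 2 * exp (-(deviationConst / 42 * ε ^ (-α) * t)) := by
  obtain ⟨y, hy, hrate⟩ := hmom.exists_deviation_rate hPL hρ hε hα hα_le one_pos le_rfl
  rw [one_rpow, mul_one] at hy
  rcases hrate with hy_lt | ⟨hy_ge, htail, -⟩
  · refine (hPL.measureReal_norm_ge_le_log_two hρ.le ht).trans ?_
    gcongr 2 * exp (-?_)
    nlinarith [log_two_gt_d9]
  · refine (htail t ht).trans ?_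
    gcongr 2 * exp (-?_)
    nlinarith

lemma HasPsiMoments.measureReal_deviation_le (hmom : HasPsiMoments ρ α ε)
    (hPL : IsPrekopaLeindler ρ) (hρ : ∫⁻ z, ENNReal.ofReal (‖z‖ ^ 2) ∂ρ = 1) (hε : 0 < ε)
    (hα : 1 ≤ α) (hα_le : α ≤ 2) {t : ℝ} (ht : 0 ≤ t) :
    ρ.real {z | t ≤ |‖z‖ - 1|} ≤
      30 * exp (-(deviationConst / 42 * ε ^ (-α) * min (t ^ (2 + α)) t)) := by
  have hc := mul_pos deviationConst_pos (rpow_pos_of_pos hε (-α))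
  rcases ht.eq_or_lt with rfl | ht_pos
  · rw [zero_rpow (by linarith), min_self, mul_zero, neg_zero, exp_zero]
    exact measureReal_le_one.trans (by norm_num)
  rcases le_or_gt t 1 with ht_one | ht_one
  · refine (hmom.measureReal_deviation_le_of_le_one hPL hρ hε hα hα_le ht_pos ht_one).trans ?_
    gcongr 30 * exp (-?_)
    nlinarith [min_le_left (t ^ (2 + α)) t, rpow_nonneg ht (2 + α)]
  rcases le_or_gt t 7 with ht_seven | ht_seven
  · calc ρ.real {z | t ≤ |‖z‖ - 1|} ≤ ρ.real {z | 1 ≤ |‖z‖ - 1|} :=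
          measureReal_mono fun z hz ↦ ht_one.le.trans hz
      _ ≤ 30 * exp (-(deviationConst * ε ^ (-α) * 1 ^ (2 + α))) :=
          hmom.measureReal_deviation_le_of_le_one hPL hρ hε hα hα_le one_pos le_rfl
      _ ≤ 30 * exp (-(deviationConst / 42 * ε ^ (-α) * min (t ^ (2 + α)) t)) := by
          rw [one_rpow]
          gcongr 30 * exp (-?_)
          nlinarith [min_le_right (t ^ (2 + α)) t]
  · have hsubset : {z : E | t ≤ |‖z‖ - 1|} ⊆ {z | t ≤ ‖z‖} := by
      intro z hz
      rcases le_abs'.1 (show t ≤ |‖z‖ - 1| from hz) with hlow | hhigh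
      · linarith [norm_nonneg z]
      · exact (by linarith : t ≤ ‖z‖)
    calc ρ.real {z | t ≤ |‖z‖ - 1|} ≤ ρ.real {z | t ≤ ‖z‖} := measureReal_mono hsubset
      _ ≤ 2 * exp (-(deviationConst / 42 * ε ^ (-α) * t)) :=
          hmom.measureReal_norm_ge_le hPL hρ hε hα hα_le ht_seven.le
      _ ≤ 30 * exp (-(deviationConst / 42 * ε ^ (-α) * min (t ^ (2 + α)) t)) := by
          have hc' := deviationConst_pos
          gcongr ?_ * exp (-(deviationConst / 42 * ε ^ (-α) * ?_))
          · norm_num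
          · exact min_le_right _ _

end Deviation

/-! ### Moments of random vectors -/

section Moments

variable {E : Type*} [NormedAddCommGroup E] [MeasurableSpace E]

lemma exists_lt_measureReal_closedBall (μ : Measure E) [IsProbabilityMeasure μ] {c : ℝ}
    (hc : c < 1) : ∃ r, 0 < r ∧ c < μ.real (Metric.closedBall 0 r) := by
  have hmono : Monotone fun m : ℕ ↦ Metric.closedBall (0 : E) m :=
    fun _ _ h ↦ Metric.closedBall_subset_closedBall (by exact_mod_cast h)
  have hlim := tendsto_measure_iUnion_atTop (μ := μ) hmono
  rw [Metric.iUnion_closedBall_nat, measure_univ] at hlim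
  have hlim_real := (ENNReal.tendsto_toReal ENNReal.one_ne_top).comp hlim
  obtain ⟨m, hm, hm_pos⟩ :=
    ((hlim_real.eventually_const_lt hc).and (Filter.eventually_gt_atTop 0)).exists
  exact ⟨m, by exact_mod_cast hm_pos, hm⟩

namespace IsPrekopaLeindler

variable [NormedSpace ℝ E] [OpensMeasurableSpace E] {μ : Measure E} [IsProbabilityMeasure μ]

lemma exists_exp_tail (hμ : IsPrekopaLeindler μ) :
    ∃ l, 0 < l ∧ ∀ t, μ.real {z | t ≤ ‖z‖} ≤ 2 * exp (-(l * t)) := by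
  have hexp : exp (-log 2) = 1 / 2 := by rw [exp_neg, exp_log two_pos, one_div]
  obtain ⟨r, hr, hball⟩ := exists_lt_measureReal_closedBall μ (by norm_num : (3 / 4 : ℝ) < 1)
  have hball_two : 3 / 4 ≤ μ.real (Metric.closedBall 0 (2 * r)) :=
    hball.le.trans (measureReal_mono (Metric.closedBall_subset_closedBall (by linarith)))
  have hannulus : μ.real (annulus E (5 * r) (16 * r)) ≤ 1 / 4 := by
    calc μ.real (annulus E (5 * r) (16 * r)) ≤ μ.real (Metric.closedBall 0 r)ᶜ := by
          refine measureReal_mono fun z hz hz_ball ↦ ?_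
          linarith [hz.1, mem_closedBall_zero_iff.1 hz_ball]
      _ ≤ 1 / 4 := by
          rw [probReal_compl_eq_one_sub measurableSet_closedBall]
          linarith
  refine ⟨log 2 / (14 * r), div_pos (log_pos one_lt_two) (by positivity), fun t ↦ ?_⟩
  rw [div_mul_eq_mul_div, ← mul_div_assoc']
  rcases le_or_gt (7 * r) t with ht | ht
  · exact hμ.measureReal_norm_ge_le hr hball_two (by rw [hexp]; linarith) hexp.le ht
  · refine measureReal_le_one.trans ?_
    calc 1 = 2 * exp (-(log 2 * 1)) := by rw [mul_one, hexp]; norm_num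
      _ ≤ 2 * exp (-(log 2 * (t / (14 * r)))) := by
        gcongr
        rw [div_le_one (by positivity)]
        linarith

lemma integrable_norm_rpow (hμ : IsPrekopaLeindler μ) {p : ℝ} (hp : 0 < p) :
    Integrable (fun z ↦ ‖z‖ ^ p) μ := by
  obtain ⟨l, hl, htail⟩ := hμ.exists_exp_tail
  refine ⟨(measurable_norm.pow_const p).aestronglyMeasurable, ?_⟩
  rw [hasFiniteIntegral_iff_ofReal (.of_forall fun z ↦ by positivity)]
  exact (lintegral_rpow_le_of_exp_tail (by fun_prop) (fun z ↦ norm_nonneg z) zero_le_two hl hp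
    fun t _ ↦ htail t).trans_lt ENNReal.ofReal_lt_top

end IsPrekopaLeindler

end Moments

section Covariance

variable {E : Type*} [NormedAddCommGroup E] [InnerProductSpace ℝ E] [MeasurableSpace E]
  {μ : Measure E}

lemma lintegral_inner_sq_eq (hμ : ∀ y, ∫ z, ⟪z, y⟫ ^ 2 ∂μ = ‖y‖ ^ 2) (y : E) :
    ∫⁻ z, ENNReal.ofReal (⟪z, y⟫ ^ 2) ∂μ = ENNReal.ofReal (‖y‖ ^ 2) := by
  rcases eq_or_ne y 0 with rfl | hy
  · simp
  have hint : Integrable (fun z ↦ ⟪z, y⟫ ^ 2) μ :=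
    .of_integral_ne_zero (by rw [hμ]; positivity)
  rw [← hμ, ofReal_integral_eq_lintegral_ofReal hint (.of_forall fun z ↦ sq_nonneg _)]

variable [FiniteDimensional ℝ E] [BorelSpace E]

lemma IsPrekopaLeindler.integrable_abs_inner_rpow [IsProbabilityMeasure μ]
    (hμ : IsPrekopaLeindler μ) (y : E) {p : ℝ} (hp : 0 < p) :
    Integrable (fun z ↦ |⟪z, y⟫| ^ p) μ := by
  refine ((hμ.integrable_norm_rpow hp).mul_const (‖y‖ ^ p)).mono'
    (Measurable.aestronglyMeasurable (by fun_prop)) (.of_forall fun z ↦ ?_)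
  rw [norm_of_nonneg (by positivity), ← mul_rpow (norm_nonneg _) (norm_nonneg _)]
  exact rpow_le_rpow (abs_nonneg _) (abs_real_inner_le_norm _ _) hp.le

lemma HasPsiMoments.map {F : Type*} [NormedAddCommGroup F] [InnerProductSpace ℝ F]
    [FiniteDimensional ℝ F] [MeasurableSpace F] [BorelSpace F] {α ε : ℝ}
    (hμ : HasPsiMoments μ α ε) (hε : 0 ≤ ε) (L : E →L[ℝ] F) :
    HasPsiMoments (μ.map L) α (‖L‖ * ε) := by
  intro θ p hp
  rw [lintegral_map (by fun_prop) L.measurable]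
  simp_rw [← ContinuousLinearMap.adjoint_inner_right]
  refine (hμ (L.adjoint θ) p hp).trans (ENNReal.ofReal_le_ofReal ?_)
  have hadjoint : ‖L.adjoint θ‖ ≤ ‖L‖ * ‖θ‖ :=
    (L.adjoint.le_opNorm θ).trans_eq (by rw [LinearIsometryEquiv.norm_map])
  refine rpow_le_rpow (by positivity) ?_ (by linarith)
  calc ε * p ^ (1 / α) * ‖L.adjoint θ‖ ≤ ε * p ^ (1 / α) * (‖L‖ * ‖θ‖) := by gcongr
    _ = ‖L‖ * ε * p ^ (1 / α) * ‖θ‖ := by ring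

end Covariance

section Matrix

variable {n : ℕ}

lemma hsNorm_sq (A : Matrix (Fin n) (Fin n) ℝ) :
    hsNorm A ^ 2 = ∑ i, ‖WithLp.toLp 2 (A i)‖ ^ 2 := by
  simp_rw [hsNorm, EuclideanSpace.norm_sq_eq, norm_eq_abs, sq_abs]
  exact sq_sqrt (by positivity)

lemma norm_mApp_sq (A : Matrix (Fin n) (Fin n) ℝ) (x : EuclideanSpace ℝ (Fin n)) :
    ‖mApp A x‖ ^ 2 = ∑ i, ⟪x, WithLp.toLp 2 (A i)⟫ ^ 2 := by
  simp_rw [EuclideanSpace.norm_sq_eq, norm_eq_abs, sq_abs]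
  rfl

lemma lintegral_norm_mApp_sq {μ : Measure (EuclideanSpace ℝ (Fin n))}
    (hμ : ∀ y, ∫ z, ⟪z, y⟫ ^ 2 ∂μ = ‖y‖ ^ 2) (A : Matrix (Fin n) (Fin n) ℝ) :
    ∫⁻ z, ENNReal.ofReal (‖mApp A z‖ ^ 2) ∂μ = ENNReal.ofReal (hsNorm A ^ 2) := by
  simp_rw [norm_mApp_sq, hsNorm_sq, ENNReal.ofReal_sum_of_nonneg fun _ _ ↦ sq_nonneg _]
  rw [lintegral_finsetSum _ fun i _ ↦ by fun_prop]
  exact Finset.sum_congr rfl fun i _ ↦ lintegral_inner_sq_eq hμ _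

lemma opNorm_pos {A : Matrix (Fin n) (Fin n) ℝ} (hA : hsNorm A ≠ 0) : 0 < opNorm A := by
  rw [opNorm, norm_pos_iff]
  intro h
  have hA₀ : A = 0 := by simpa using h
  exact hA (by simp [hA₀, hsNorm])

/-- The operator `A / √n`, which has Hilbert–Schmidt norm `1` when `‖A‖_HS² = n`. -/
def normalizedOperator (A : Matrix (Fin n) (Fin n) ℝ) :
    EuclideanSpace ℝ (Fin n) →L[ℝ] EuclideanSpace ℝ (Fin n) :=
  (√n)⁻¹ • LinearMap.toContinuousLinearMap (Matrix.toEuclideanLin A)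

lemma norm_normalizedOperator (A : Matrix (Fin n) (Fin n) ℝ) :
    ‖normalizedOperator A‖ = opNorm A / √n := by
  rw [normalizedOperator, norm_smul, norm_inv, norm_of_nonneg (sqrt_nonneg _), inv_mul_eq_div,
    opNorm]

lemma norm_normalizedOperator_apply (A : Matrix (Fin n) (Fin n) ℝ)
    (x : EuclideanSpace ℝ (Fin n)) : ‖normalizedOperator A x‖ = ‖mApp A x‖ / √n := by
  change ‖(√n)⁻¹ • mApp A x‖ = _
  rw [norm_smul, norm_inv, norm_of_nonneg (sqrt_nonneg _), inv_mul_eq_div]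

lemma lintegral_norm_sq_map_normalizedOperator {μ : Measure (EuclideanSpace ℝ (Fin n))}
    (hμ : ∀ y, ∫ z, ⟪z, y⟫ ^ 2 ∂μ = ‖y‖ ^ 2) (hn : 0 < n) {A : Matrix (Fin n) (Fin n) ℝ}
    (hA : hsNorm A ^ 2 = n) :
    ∫⁻ z, ENNReal.ofReal (‖z‖ ^ 2) ∂μ.map (normalizedOperator A) = 1 := by
  rw [lintegral_map (by fun_prop) (normalizedOperator A).measurable]
  simp_rw [norm_normalizedOperator_apply, div_pow, div_eq_mul_inv,
    fun x ↦ ENNReal.ofReal_mul (q := (√n ^ 2)⁻¹) (sq_nonneg ‖mApp A x‖)]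
  rw [lintegral_mul_const' _ _ ENNReal.ofReal_ne_top, lintegral_norm_mApp_sq hμ, hA,
    ← ENNReal.ofReal_mul n.cast_nonneg, sq_sqrt n.cast_nonneg,
    mul_inv_cancel₀ (by positivity), ENNReal.ofReal_one]

lemma le_abs_norm_normalizedOperator_sub_one_iff (hn : 0 < n) (A : Matrix (Fin n) (Fin n) ℝ)
    (x : EuclideanSpace ℝ (Fin n)) (t : ℝ) :
    t ≤ |‖normalizedOperator A x‖ - 1| ↔ t * √n ≤ |‖mApp A x‖ - √n| := by
  have hsqrt : 0 < √n := by positivity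
  have hscale : ‖mApp A x‖ - √n = (‖normalizedOperator A x‖ - 1) * √n := by
    rw [norm_normalizedOperator_apply]
    field_simp
  rw [hscale, abs_mul, abs_of_pos hsqrt, mul_le_mul_iff_left₀ hsqrt]

end Matrix

section RandomVector

variable {Ω : Type*} [MeasurableSpace Ω] {P : Measure Ω} {n : ℕ}
  {X : Ω → EuclideanSpace ℝ (Fin n)} {α b : ℝ}

lemma map_normalizedOperator_deviation (hX : Measurable X) (hn : 0 < n)
    (A : Matrix (Fin n) (Fin n) ℝ) (t : ℝ) :
    (P.map X).map (normalizedOperator A) {z | t ≤ |‖z‖ - 1|} =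
      P {ω | t * √n ≤ |‖mApp A (X ω)‖ - √n|} := by
  have hL : Measurable (normalizedOperator A) := (normalizedOperator A).measurable
  rw [Measure.map_map hL hX, Measure.map_apply (hL.comp hX)
    (measurableSet_le measurable_const (by fun_prop))]
  simp only [Set.preimage_ofPred_eq, Function.comp_apply,
    le_abs_norm_normalizedOperator_sub_one_iff hn]

lemma IsPsiAlpha.constant_pos (hψ : IsPsiAlpha P X α b)
    (hcov : ∀ y, ∫ ω, ⟪X ω, y⟫ ^ 2 ∂P = ‖y‖ ^ 2) (hn : 0 < n) : 0 < b := by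
  have hmoment := hψ 2 le_rfl (EuclideanSpace.single ⟨0, hn⟩ 1)
  simp only [rpow_two, sq_abs, hcov, PiLp.norm_single, norm_one, one_pow, one_rpow,
    mul_one] at hmoment
  exact pos_of_mul_pos_left (one_pos.trans_le hmoment) (by positivity)

lemma IsPsiAlpha.hasPsiMoments [IsProbabilityMeasure P] (hψ : IsPsiAlpha P X α b)
    (hX : Measurable X) (hPL : IsPrekopaLeindler (P.map X))
    (hcov : ∀ y, ∫ ω, ⟪X ω, y⟫ ^ 2 ∂P = ‖y‖ ^ 2) : HasPsiMoments (P.map X) α b := by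
  have : IsProbabilityMeasure (P.map X) := Measure.isProbabilityMeasure_map hX.aemeasurable
  intro y p hp
  have hp₀ : 0 < p := by linarith
  have hint := hPL.integrable_abs_inner_rpow y hp₀
  rw [← ofReal_integral_eq_lintegral_ofReal hint (.of_forall fun z ↦ by positivity),
    integral_map hX.aemeasurable hint.1]
  refine ENNReal.ofReal_le_ofReal ?_
  have hmoment := hψ p hp y
  rw [hcov, ← sqrt_eq_rpow, sqrt_sq (norm_nonneg _)] at hmoment
  have hnonneg : 0 ≤ ∫ ω, |⟪X ω, y⟫| ^ p ∂P := integral_nonneg fun ω ↦ by positivity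
  calc ∫ ω, |⟪X ω, y⟫| ^ p ∂P = ((∫ ω, |⟪X ω, y⟫| ^ p ∂P) ^ (1 / p)) ^ p := by
        rw [← rpow_mul hnonneg, one_div_mul_cancel hp₀.ne', rpow_one]
    _ ≤ (b * p ^ (1 / α) * ‖y‖) ^ p := rpow_le_rpow (by positivity) hmoment hp₀.le

end RandomVector

lemma div_sqrt_mul_rpow_neg {a b m : ℝ} (ha : 0 ≤ a) (hb : 0 ≤ b) (hm : 0 ≤ m) (α : ℝ) :
    (a / √m * b) ^ (-α) = (m / (a ^ 2 * b ^ 2)) ^ (α / 2) := by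
  have hsq : m / (a ^ 2 * b ^ 2) = ((a / √m * b)⁻¹) ^ (2 : ℝ) := by
    rw [rpow_two, inv_pow, mul_pow, div_pow, sq_sqrt hm, div_mul_eq_mul_div, inv_div]
  have hnonneg : 0 ≤ a / √m * b := by positivity
  rw [hsq, ← rpow_mul (inv_nonneg.2 hnonneg), mul_div_cancel₀ α two_ne_zero, inv_rpow hnonneg,
    rpow_neg hnonneg]

theorem statement1_general {Ω : Type*} [MeasurableSpace Ω] {P : Measure Ω}
    [IsProbabilityMeasure P] {n : ℕ} {X : Ω → EuclideanSpace ℝ (Fin n)}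
    {f : EuclideanSpace ℝ (Fin n) → ℝ} {α b : ℝ} {A : Matrix (Fin n) (Fin n) ℝ}
    (hXf : HasDensityFn P X f) (hf : IsLogConcaveFn f)
    (hcov : ∀ y, ∫ ω, ⟪X ω, y⟫ ^ 2 ∂P = ‖y‖ ^ 2) (hα : 1 ≤ α) (hα_le : α ≤ 2)
    (hψ : IsPsiAlpha P X α b) (hA : hsNorm A ^ 2 = n) {t : ℝ} (ht : 0 ≤ t) :
    P {ω | t * √n ≤ |‖mApp A (X ω)‖ - √n|} ≤
      ENNReal.ofReal (30 * exp (-(deviationConst / 42 *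
        ((n : ℝ) / (opNorm A ^ 2 * b ^ 2)) ^ (α / 2) * min (t ^ (2 + α)) t))) := by
  obtain ⟨hX, hmap⟩ := hXf
  rcases n.eq_zero_or_pos with rfl | hn
  · rw [Nat.cast_zero, zero_div, zero_rpow (by linarith), mul_zero, zero_mul, neg_zero, exp_zero]
    exact prob_le_one.trans (by norm_num)
  have hPL : IsPrekopaLeindler (P.map X) := hmap ▸ hf.isPrekopaLeindler_withDensity
  have : IsProbabilityMeasure (P.map X) := Measure.isProbabilityMeasure_map hX.aemeasurable
  have hL : Measurable (normalizedOperator A) := (normalizedOperator A).measurable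
  have : IsProbabilityMeasure ((P.map X).map (normalizedOperator A)) :=
    Measure.isProbabilityMeasure_map hL.aemeasurable
  have hb : 0 < b := hψ.constant_pos hcov hn
  have hA_pos : 0 < opNorm A := opNorm_pos <|
    (pow_ne_zero_iff two_ne_zero).1 (hA ▸ Nat.cast_ne_zero.2 hn.ne')
  have hcov_map (y) : ∫ z, ⟪z, y⟫ ^ 2 ∂P.map X = ‖y‖ ^ 2 := by
    rw [integral_map hX.aemeasurable (by fun_prop), hcov]
  have hmom := (hψ.hasPsiMoments hX hPL hcov).map hb.le (normalizedOperator A)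
  rw [norm_normalizedOperator] at hmom
  have hdev := hmom.measureReal_deviation_le (hPL.map (normalizedOperator A).toLinearMap hL)
    (lintegral_norm_sq_map_normalizedOperator hcov_map hn hA) (by positivity) hα hα_le ht
  rw [div_sqrt_mul_rpow_neg hA_pos.le hb.le n.cast_nonneg] at hdev
  rw [← map_normalizedOperator_deviation hX hn, ← ofReal_measureReal]
  exact ENNReal.ofReal_le_ofReal hdev

/-- deviation estimate for `|AX|` under a ψ_α condition. -/
theorem statement1 :
    ∃ c C : ℝ, 0 < c ∧ 0 < C ∧
      ∀ (n : ℕ) (Ω : Type) (_mΩ : MeasurableSpace Ω) (P : Measure Ω),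
        IsProbabilityMeasure P →
        ∀ (X : Ω → EuclideanSpace ℝ (Fin n)) (f : EuclideanSpace ℝ (Fin n) → ℝ)
          (α b : ℝ) (A : Matrix (Fin n) (Fin n) ℝ),
          HasDensityFn P X f → IsLogConcaveFn f → Isotropic P X →
          1 ≤ α → α ≤ 2 → IsPsiAlpha P X α b →
          hsNorm A ^ 2 = n →
          ∀ t : ℝ, 0 ≤ t →
            P {ω | t * Real.sqrt n ≤ |‖mApp A (X ω)‖ - Real.sqrt n|} ≤
              ENNReal.ofReal (C * Real.exp
                (-(c * ((n : ℝ) / (opNorm A ^ 2 * b ^ 2)) ^ (α/2) *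
                  min (t ^ (2 + α)) t))) := by
  refine ⟨deviationConst / 42, 30, div_pos deviationConst_pos (by norm_num), by norm_num, ?_⟩
  intro n Ω _ P _ X f α b A hXf hf hX hα hα_le hψ hA t ht
  have hcov (y) : ∫ ω, ⟪X ω, y⟫ ^ 2 ∂P = ‖y‖ ^ 2 := by
    simpa only [sq, real_inner_self_eq_norm_mul_norm] using hX.2 y y
  exact statement1_general hXf hf hcov hα hα_le hψ hA ht
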